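/- arXiv:1205.4692 — 2 statements merged into one kernel-verified Lean document; each statement's English description precedes it below -/
import Mathlib

section
/- Under assumptions G3(1), G4(β) and G5 on g, and if the kernel K satisfies K1 and K2(α) for some α ≥ β, then for every h > 0 and Δ > 0 the bias b(x₀) = E[ĝ_h(x₀)] − g(x₀) of the kernel estimator satisfies |b(x₀)|² ≤ c₁ h^{2β} + c₁′ Δ², where c₁ = 2 (L/⌊β⌋! · ∫|K(v)| |v|^β dv)² and c₁′ = 2 (2‖g′‖_∞ ‖g‖₁ ‖K‖₁)². -/
open MeasureTheory Real Filter Finset Asymptotics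
open scoped Topology

noncomputable section

namespace LevyAdapt

/-- Fourier transform `g*(u) = ∫ e^{iux} g(x) dx`. -/
def ft (g : ℝ → ℝ) (u : ℝ) : ℂ :=
  ∫ x : ℝ, Complex.exp (Complex.I * u * x) * (g x : ℂ)

/-- Scaled kernel `K_h(x) = h⁻¹ K(x/h)`. -/
def sk (K : ℝ → ℝ) (h x : ℝ) : ℝ := h⁻¹ * K (x / h)

/-- L¹ norm. -/
def nl1 (f : ℝ → ℝ) : ℝ := ∫ x : ℝ, |f x|

/-- Squared L² norm. -/
def nl2sq (f : ℝ → ℝ) : ℝ := ∫ x : ℝ, (f x) ^ 2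

/-- Sup norm. -/
def nsup (f : ℝ → ℝ) : ℝ := ⨆ x : ℝ, |f x|

/-- L¹ norm of a complex-valued function on ℝ. -/
def cnl1 (f : ℝ → ℂ) : ℝ := ∫ u : ℝ, ‖f u‖

/-- Squared L² norm of a complex-valued function on ℝ. -/
def cnl2sq (f : ℝ → ℂ) : ℝ := ∫ u : ℝ, ‖f u‖ ^ 2

/-- The largest integer strictly smaller than `β` (for `β > 0`). -/
def hfloor (β : ℝ) : ℕ := ⌈β⌉₊ - 1

/-- The Hölder class `H(β, L)`: with `l = hfloor β`, the `l`-th derivative exists and is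
`(β - l)`-Hölder with constant `L`. -/
def Holder (β L : ℝ) (f : ℝ → ℝ) : Prop :=
  (∀ m : ℕ, m < hfloor β → Differentiable ℝ (iteratedDeriv m f)) ∧
  ∀ x y : ℝ,
    |iteratedDeriv (hfloor β) f x - iteratedDeriv (hfloor β) f y| ≤
      L * |x - y| ^ (β - (hfloor β : ℝ))

/-- Assumption G1: `g ∈ L²`. -/
def G1 (g : ℝ → ℝ) : Prop := Integrable (fun x : ℝ => (g x) ^ 2)

/-- Assumption G2: `g*` is differentiable a.e. and its derivative is integrable. -/
def G2 (g : ℝ → ℝ) : Prop :=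
  (∀ᵐ u : ℝ, DifferentiableAt ℝ (ft g) u) ∧ Integrable (deriv (ft g))

/-- Assumption G3(p): `∫ |x|^(p-1) |g(x)| dx < ∞`. -/
def G3 (p : ℕ) (g : ℝ → ℝ) : Prop :=
  Integrable (fun x : ℝ => |x| ^ (p - 1) * |g x|)

/-- Assumption G5: `g'` exists and is uniformly bounded. -/
def G5 (g : ℝ → ℝ) : Prop :=
  Differentiable ℝ g ∧ BddAbove (Set.range fun x : ℝ => |deriv g x|)

/-- Assumption K1: `K ∈ L¹ ∩ L² ∩ L^∞` and `K* ∈ L¹`. -/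
def K1 (K : ℝ → ℝ) : Prop :=
  Measurable K ∧ Integrable K ∧ Integrable (fun x : ℝ => (K x) ^ 2) ∧
    BddAbove (Set.range fun x : ℝ => |K x|) ∧ Integrable (ft K)

/-- `K` is a kernel of order `m`. -/
def KernelOrder (m : ℕ) (K : ℝ → ℝ) : Prop :=
  (∀ j : ℕ, j ≤ m → Integrable (fun t : ℝ => t ^ j * K t)) ∧
  (∫ t : ℝ, K t) = 1 ∧
  ∀ j : ℕ, 1 ≤ j → j ≤ m → (∫ t : ℝ, t ^ j * K t) = 0

/-- Assumption K2(α): `K` is a kernel of order `hfloor α` and `∫ |x|^α |K(x)| dx < ∞`. -/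
def K2 (α : ℝ) (K : ℝ → ℝ) : Prop :=
  KernelOrder (hfloor α) K ∧ Integrable (fun x : ℝ => |x| ^ α * |K x|)

/-- `P` is the law of an increment of length `Δ` of the pure-jump Lévy process with Lévy
density `N`, characterized through its characteristic function. -/
def IncrementLawN (P : Measure ℝ) (Δ : ℝ) (N : ℝ → ℝ) : Prop :=
  ∀ u : ℝ,
    (∫ x : ℝ, Complex.exp (Complex.I * u * x) ∂P) =
      Complex.exp ((Δ : ℂ) * ∫ x : ℝ, (Complex.exp (Complex.I * u * x) - 1) * (N x : ℂ))

/-- Increment law expressed through `g(x) = x N(x)`, i.e. `N(x) = g(x)/x`. -/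
def IncrementLaw (P : Measure ℝ) (Δ : ℝ) (g : ℝ → ℝ) : Prop :=
  IncrementLawN P Δ fun x => g x / x

/-- The `n`-sample (i.i.d.) product measure. -/
def pm (P : Measure ℝ) [SigmaFinite P] (n : ℕ) : Measure (Fin n → ℝ) :=
  Measure.pi fun _ => P

/-- The kernel estimator `ĝ_h(x) = (nΔ)⁻¹ ∑ₖ Zₖ K_h(x - Zₖ)`. -/
def ghat (K : ℝ → ℝ) (h Δ : ℝ) {n : ℕ} (z : Fin n → ℝ) (x : ℝ) : ℝ :=
  ((n : ℝ) * Δ)⁻¹ * ∑ k : Fin n, z k * sk K h (x - z k)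

/-- The auxiliary estimator `ĝ_{h,h'}(x)` using the convolved kernel `K_{h'} ⋆ K_h`. -/
def ghat2 (K : ℝ → ℝ) (h h' Δ : ℝ) {n : ℕ} (z : Fin n → ℝ) (x : ℝ) : ℝ :=
  ((n : ℝ) * Δ)⁻¹ *
    ∑ k : Fin n, z k * ∫ y : ℝ, sk K h' y * sk K h (x - z k - y)

/-- Mean `E[ĝ_h(x)]` of the kernel estimator. -/
def mghat (K : ℝ → ℝ) (h Δ : ℝ) (n : ℕ) (P : Measure ℝ) [SigmaFinite P] (x : ℝ) : ℝ :=
  ∫ z : Fin n → ℝ, ghat K h Δ z x ∂(pm P n)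

/-- Mean `E[ĝ_{h,h'}(x)]` of the auxiliary estimator. -/
def mghat2 (K : ℝ → ℝ) (h h' Δ : ℝ) (n : ℕ) (P : Measure ℝ) [SigmaFinite P] (x : ℝ) : ℝ :=
  ∫ z : Fin n → ℝ, ghat2 K h h' Δ z x ∂(pm P n)

/-- The pointwise mean squared error `E[(ĝ_h(x) - g(x))²]`. -/
def mse (K : ℝ → ℝ) (h Δ : ℝ) (n : ℕ) (P : Measure ℝ) [SigmaFinite P]
    (g : ℝ → ℝ) (x : ℝ) : ℝ :=
  ∫ z : Fin n → ℝ, (ghat K h Δ z x - g x) ^ 2 ∂(pm P n)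

/-- The variance `Var[ĝ_h(x)]`. -/
def varghat (K : ℝ → ℝ) (h Δ : ℝ) (n : ℕ) (P : Measure ℝ) [SigmaFinite P] (x : ℝ) : ℝ :=
  ∫ z : Fin n → ℝ, (ghat K h Δ z x - mghat K h Δ n P x) ^ 2 ∂(pm P n)

/-- The constant `c₁ = 2 (L/⌊β⌋! ∫|K(v)||v|^β dv)²`. -/
def c1 (K : ℝ → ℝ) (β L : ℝ) : ℝ :=
  2 * (L / (Nat.factorial (hfloor β) : ℝ) * ∫ v : ℝ, |K v| * |v| ^ β) ^ 2

/-- The constant `c₁' = 2 (2‖g'‖_∞ ‖g‖₁ ‖K‖₁)²`. -/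
def c1' (K g : ℝ → ℝ) : ℝ := 2 * (2 * nsup (deriv g) * nl1 g * nl1 K) ^ 2

/-- The constant `c₂ = ‖(g*)'‖₁ ‖K‖₂² / (2π)`. -/
def c2 (K g : ℝ → ℝ) : ℝ := cnl1 (deriv (ft g)) * nl2sq K / (2 * π)

/-- The constant `c₂' = ‖K‖₂² ‖g‖₂²`. -/
def c2' (K g : ℝ → ℝ) : ℝ := nl2sq K * nl2sq g

/-- The constant `C₀ = (c/(2π)) ‖K‖₂² (‖(g*)'‖₁ + ‖g*‖₂²)`. -/
def C0 (c : ℝ) (K g : ℝ → ℝ) : ℝ :=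
  c / (2 * π) * nl2sq K * (cnl1 (deriv (ft g)) + cnl2sq (ft g))

/-- The penalty `V(h) = C₀ log(nΔ) / (nhΔ)`. -/
def Vfun (c : ℝ) (K g : ℝ → ℝ) (n : ℕ) (Δ h : ℝ) : ℝ :=
  C0 c K g * Real.log ((n : ℝ) * Δ) / ((n : ℝ) * h * Δ)

/-- The bandwidth collection `H = {j/M : 1 ≤ j ≤ M}`. -/
def bset (M : ℕ) : Finset ℝ := (Finset.Icc 1 M).image fun j : ℕ => (j : ℝ) / (M : ℝ)

/-- The quantity `A(h, x₀) = sup_{h' ∈ H} [ |ĝ_{h,h'}(x₀) - ĝ_{h'}(x₀)|² - V(h') ]₊`. -/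
def Afun (K : ℝ → ℝ) (Δ : ℝ) (H : Finset ℝ) (V : ℝ → ℝ) {n : ℕ}
    (z : Fin n → ℝ) (x h : ℝ) : ℝ :=
  ⨆ h' ∈ H, max ((ghat2 K h h' Δ z x - ghat K h' Δ z x) ^ 2 - V h') 0

/-- Average `Δ̄` of the sampling intervals. -/
def dbar {n : ℕ} (Δs : Fin n → ℝ) : ℝ := (n : ℝ)⁻¹ * ∑ k, Δs k

/-- Average `Δ²‾` of the squared sampling intervals. -/
def d2bar {n : ℕ} (Δs : Fin n → ℝ) : ℝ := (n : ℝ)⁻¹ * ∑ k, (Δs k) ^ 2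

/-- The truncation level `μ_n(h)`. -/
def mulev (c : ℝ) (K g : ℝ → ℝ) (n : ℕ) (Δ h : ℝ) : ℝ :=
  nl2sq K * (cnl1 (deriv (ft g)) + cnl2sq (ft g)) /
    (2 * π * nsup K * Real.sqrt (Vfun c K g n Δ h / 6))

/-- The truncated summand `W(h)` as a function of a single observation. -/
def Wtr (c : ℝ) (K g : ℝ → ℝ) (n : ℕ) (Δ h x₀ x : ℝ) : ℝ :=
  if |x| ≤ mulev c K g n Δ h then x / Δ * sk K h (x₀ - x) else 0

/-- The remainder summand `T(h)` as a function of a single observation. -/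
def Ttr (c : ℝ) (K g : ℝ → ℝ) (n : ℕ) (Δ h x₀ x : ℝ) : ℝ :=
  if mulev c K g n Δ h < |x| then x / Δ * sk K h (x₀ - x) else 0

/-- The empirical estimator of `‖(g*)'‖₁`. -/
def estDeriv (Δ : ℝ) {n : ℕ} (z : Fin n → ℝ) (hband : ℝ) : ℝ :=
  ∫ u : ℝ, ‖(((n : ℝ) * Δ)⁻¹ : ℂ) *
      ∑ k : Fin n, (z k : ℂ) ^ 2 *
        (Set.indicator (Set.Icc (-1 : ℝ) 1) (fun _ => (1 : ℂ)) (u * hband)) *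
        Complex.exp (Complex.I * u * z k)‖

/-- The empirical estimator of `‖g*‖₂²`. -/
def estL2 (Δ : ℝ) {n : ℕ} (z : Fin n → ℝ) (hband : ℝ) : ℝ :=
  ∫ u : ℝ, ‖(((n : ℝ) * Δ)⁻¹ : ℂ) *
      ∑ k : Fin n, (z k : ℂ) *
        (Set.indicator (Set.Icc (-1 : ℝ) 1) (fun _ => (1 : ℂ)) (u * hband)) *
        Complex.exp (Complex.I * u * z k)‖ ^ 2

/-- The data-driven penalty `V(h)` built with the estimated constant `C₀`. -/
def VfunHat (c : ℝ) (K : ℝ → ℝ) (n : ℕ) (Δ : ℝ) {m : ℕ} (z : Fin m → ℝ) (h : ℝ) : ℝ :=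
  c / (2 * π) * nl2sq K *
      (estDeriv Δ z (((n : ℝ) * Δ) ^ (-(1/3 : ℝ))) + estL2 Δ z (((n : ℝ) * Δ) ^ (-(1/3 : ℝ)))) *
    Real.log ((n : ℝ) * Δ) / ((n : ℝ) * h * Δ)

lemma norm_cexp_I_mul (u x : ℝ) : ‖Complex.exp (Complex.I * u * x)‖ = 1 := by
  rw [mul_assoc, ← Complex.ofReal_mul, mul_comm, Complex.norm_exp_ofReal_mul_I]

/-- The image under `X` of the measure with density `a⁺` with respect to `μ`. -/
def posMap {Ω : Type*} [MeasurableSpace Ω] (μ : Measure Ω) (X : Ω → ℝ) (a : Ω → ℝ) : Measure ℝ :=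
  (μ.withDensity fun ω => ENNReal.ofReal (a ω)).map X

lemma isFiniteMeasure_posMap {Ω : Type*} [MeasurableSpace Ω] {μ : Measure Ω} {X a : Ω → ℝ}
    (ha : Integrable a μ) : IsFiniteMeasure (posMap μ X a) := by
  have := isFiniteMeasure_withDensity_ofReal ha.2
  unfold posMap
  infer_instance

lemma integral_posMap {Ω E : Type*} [MeasurableSpace Ω] [NormedAddCommGroup E] [NormedSpace ℝ E]
    {μ : Measure Ω} {X a : Ω → ℝ} (hX : Measurable X) (ha : Integrable a μ) {φ : ℝ → E}
    (hφ : StronglyMeasurable φ) :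
    ∫ x, φ x ∂(posMap μ X a) = ∫ ω, max (a ω) 0 • φ (X ω) ∂μ := by
  rw [posMap, integral_map hX.aemeasurable hφ.aestronglyMeasurable,
    integral_withDensity_eq_integral_toReal_smul₀ ha.aemeasurable.ennreal_ofReal
      (ae_of_all _ fun _ => ENNReal.ofReal_lt_top)]
  simp only [ENNReal.toReal_ofReal']

lemma integral_posMap_sub {Ω E : Type*} [MeasurableSpace Ω] [NormedAddCommGroup E]
    [NormedSpace ℝ E] {μ : Measure Ω} {X a : Ω → ℝ} (hX : Measurable X) (ha : Integrable a μ)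
    {φ : ℝ → E} (hφ : StronglyMeasurable φ) {C : ℝ} (hC : ∀ x, ‖φ x‖ ≤ C) :
    ∫ x, φ x ∂(posMap μ X a) - ∫ x, φ x ∂(posMap μ X fun ω => -a ω) =
      ∫ ω, a ω • φ (X ω) ∂μ := by
  have hb : ∀ {b : Ω → ℝ}, Integrable b μ → Integrable (fun ω => max (b ω) 0 • φ (X ω)) μ :=
    fun hb => hb.pos_part.smul_bdd C (hφ.comp_measurable hX).aestronglyMeasurable
      (ae_of_all _ fun ω => hC _)
  rw [integral_posMap hX ha hφ, integral_posMap (a := fun ω => -a ω) hX ha.neg hφ,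
    ← integral_sub (hb ha) (hb (b := fun ω => -a ω) ha.neg)]
  congr 1 with ω
  rw [← sub_smul, max_zero_sub_max_neg_zero_eq_self]

/-- A finite signed measure on `ℝ`, given as the image of a signed density, is determined by its
characteristic function. -/
lemma integral_comp_eq_of_char {Ω₁ Ω₂ : Type*} [MeasurableSpace Ω₁] [MeasurableSpace Ω₂]
    {μ₁ : Measure Ω₁} {μ₂ : Measure Ω₂} {X₁ a₁ : Ω₁ → ℝ} {X₂ a₂ : Ω₂ → ℝ}
    (hX₁ : Measurable X₁) (hX₂ : Measurable X₂) (ha₁ : Integrable a₁ μ₁) (ha₂ : Integrable a₂ μ₂)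
    (hchar : ∀ u : ℝ, ∫ ω, a₁ ω • Complex.exp (Complex.I * u * X₁ ω) ∂μ₁ =
      ∫ ω, a₂ ω • Complex.exp (Complex.I * u * X₂ ω) ∂μ₂)
    {f : ℝ → ℝ} (hf : Measurable f) {C : ℝ} (hC : ∀ x, |f x| ≤ C) :
    ∫ ω, a₁ ω * f (X₁ ω) ∂μ₁ = ∫ ω, a₂ ω * f (X₂ ω) ∂μ₂ := by
  have := isFiniteMeasure_posMap (X := X₁) ha₁
  have := isFiniteMeasure_posMap (X := X₂) ha₂
  have : IsFiniteMeasure (posMap μ₁ X₁ fun ω => -a₁ ω) := isFiniteMeasure_posMap ha₁.neg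
  have : IsFiniteMeasure (posMap μ₂ X₂ fun ω => -a₂ ω) := isFiniteMeasure_posMap ha₂.neg
  have key : posMap μ₁ X₁ a₁ + posMap μ₂ X₂ (fun ω => -a₂ ω) =
      posMap μ₂ X₂ a₂ + posMap μ₁ X₁ (fun ω => -a₁ ω) := by
    refine Measure.ext_of_charFun (funext fun u => ?_)
    have hm : StronglyMeasurable fun x : ℝ => Complex.exp (Complex.I * u * x) := by
      apply Continuous.stronglyMeasurable; fun_prop
    have hn : ∀ x : ℝ, ‖Complex.exp (Complex.I * u * x)‖ ≤ 1 := fun x =>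
      (norm_cexp_I_mul u x).le
    have hint : ∀ (m : Measure ℝ) [IsFiniteMeasure m],
        Integrable (fun x : ℝ => Complex.exp (Complex.I * u * x)) m := fun m _ =>
      Integrable.of_bound hm.aestronglyMeasurable 1 (ae_of_all _ hn)
    have hu := hchar u
    rw [← integral_posMap_sub hX₁ ha₁ hm hn, ← integral_posMap_sub hX₂ ha₂ hm hn] at hu
    have hcomm : ∀ x : ℝ, (u : ℂ) * x * Complex.I = Complex.I * u * x := fun x => by ring
    simp only [charFun_apply_real, hcomm]
    rw [integral_add_measure (hint _) (hint _), integral_add_measure (hint _) (hint _)]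
    linear_combination hu
  have hm : StronglyMeasurable f := hf.stronglyMeasurable
  have hint : ∀ (m : Measure ℝ) [IsFiniteMeasure m], Integrable f m := fun m _ =>
    Integrable.of_bound hm.aestronglyMeasurable C (ae_of_all _ hC)
  have h1 := integral_posMap_sub hX₁ ha₁ hm hC
  have h2 := integral_posMap_sub hX₂ ha₂ hm hC
  have h3 := congrArg (fun m => ∫ x, f x ∂m) key
  rw [integral_add_measure (hint _) (hint _), integral_add_measure (hint _) (hint _)] at h3
  simp only [smul_eq_mul] at h1 h2
  linarith

/-- The characteristic exponent has derivative `i g*`. -/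
lemma hasDerivAt_exponent {g : ℝ → ℝ} (hg : Integrable g) (u : ℝ) :
    HasDerivAt (fun u : ℝ => ∫ x : ℝ, (Complex.exp (Complex.I * u * x) - 1) * ((g x / x : ℝ) : ℂ))
      (Complex.I * ft g u) u := by
  have hmeas : AEStronglyMeasurable (fun x : ℝ => ((g x / x : ℝ) : ℂ)) :=
    Complex.continuous_ofReal.comp_aestronglyMeasurable
      (hg.aestronglyMeasurable.aemeasurable.div measurable_id.aemeasurable).aestronglyMeasurable
  have hne : ∀ᵐ x : ℝ, x ≠ 0 := by simp [ae_iff]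
  have hgm : AEStronglyMeasurable (fun x : ℝ => (g x : ℂ)) :=
    Complex.continuous_ofReal.comp_aestronglyMeasurable hg.aestronglyMeasurable
  have hF : ∀ v : ℝ, AEStronglyMeasurable
      (fun x : ℝ => (Complex.exp (Complex.I * v * x) - 1) * ((g x / x : ℝ) : ℂ)) := fun v =>
    (Continuous.aestronglyMeasurable (by fun_prop)).mul hmeas
  have h := hasDerivAt_integral_of_dominated_loc_of_deriv_le (μ := volume) (𝕜 := ℝ)
    (F := fun (v x : ℝ) => (Complex.exp (Complex.I * v * x) - 1) * ((g x / x : ℝ) : ℂ))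
    (F' := fun (v x : ℝ) => Complex.I * (Complex.exp (Complex.I * v * x) * (g x : ℂ)))
    (x₀ := u) (s := Set.univ) (bound := fun x => |g x|) Filter.univ_mem
    (Eventually.of_forall hF) ?_ ?_ ?_ hg.abs ?_
  · have h2 := h.2
    rwa [integral_const_mul] at h2
  · refine (hg.abs.const_mul |u|).mono' (hF u) ?_
    filter_upwards [hne] with x hx
    rw [norm_mul, mul_assoc, ← Complex.ofReal_mul, Complex.norm_real, norm_div]
    calc _ ≤ ‖u * x‖ * (‖g x‖ / ‖x‖) := by
          gcongr; exact Real.norm_exp_I_mul_ofReal_sub_one_le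
      _ = _ := by
          have : ‖x‖ ≠ 0 := by simpa using hx
          rw [norm_mul]; field_simp; simp
  · exact ((Continuous.aestronglyMeasurable (by fun_prop)).mul hgm).const_mul _
  · exact ae_of_all _ fun x v _ => by simp [norm_cexp_I_mul]
  · filter_upwards [hne] with x hx v _
    have h1 : HasDerivAt (fun v : ℝ => Complex.I * (v : ℂ) * x) (Complex.I * x) v := by
      simpa using ((Complex.ofRealCLM.hasDerivAt (x := v)).const_mul Complex.I).mul_const (x : ℂ)
    have h2 := ((h1.cexp).sub_const 1).mul_const ((g x / x : ℝ) : ℂ)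
    refine h2.congr_deriv ?_
    have : (x : ℂ) ≠ 0 := by exact_mod_cast hx
    push_cast
    field_simp

/-- Derivative of the characteristic function of an increment. -/
lemma hasDerivAt_char {g : ℝ → ℝ} (hg : Integrable g) {Δ : ℝ} {P : Measure ℝ}
    (hP : IncrementLaw P Δ g) (u : ℝ) :
    HasDerivAt (fun u : ℝ => ∫ x : ℝ, Complex.exp (Complex.I * u * x) ∂P)
      (Δ * Complex.I * (ft g u * ∫ x : ℝ, Complex.exp (Complex.I * u * x) ∂P)) u := by
  have h := (((hasDerivAt_exponent hg u).const_mul (Δ : ℂ)).cexp)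
  have he : (fun u : ℝ => ∫ x : ℝ, Complex.exp (Complex.I * u * x) ∂P) = fun u : ℝ =>
      Complex.exp ((Δ : ℂ) * ∫ x : ℝ, (Complex.exp (Complex.I * u * x) - 1) *
        ((g x / x : ℝ) : ℂ)) := funext hP
  have heu := congrFun he u
  rw [he, heu]
  exact h.congr_deriv (by ring)

lemma ft_mul_char (g : ℝ → ℝ) (P : Measure ℝ) [IsProbabilityMeasure P] (u : ℝ) :
    ft g u * ∫ x : ℝ, Complex.exp (Complex.I * u * x) ∂P =
      ∫ p : ℝ × ℝ, (g p.1 : ℂ) * Complex.exp (Complex.I * u * (p.1 + p.2 : ℝ))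
        ∂((volume : Measure ℝ).prod P) := by
  rw [ft, ← integral_prod_mul]
  congr 1 with p
  push_cast
  rw [mul_add, Complex.exp_add]
  ring

lemma integral_cexp_window (t u w : ℝ) :
    ∫ s in -t..t, Complex.exp (Complex.I * ((u + s : ℝ) : ℂ) * w) =
      (2 * t * sinc (t * w) : ℝ) * Complex.exp (Complex.I * u * w) := by
  have h1 : ∀ s : ℝ, Complex.exp (Complex.I * ((u + s : ℝ) : ℂ) * w) =
      Complex.exp (Complex.I * u * w) * Complex.exp ((w * s : ℝ) * Complex.I) := fun s => by
    rw [← Complex.exp_add]; congr 1; push_cast; ring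
  simp_rw [h1]
  rw [intervalIntegral.integral_const_mul, mul_comm]
  congr 1
  by_cases hw : w = 0
  · simp [hw]; ring
  rw [intervalIntegral.integral_comp_mul_left (fun s : ℝ => Complex.exp (s * Complex.I)) hw,
    mul_neg, integral_exp_mul_I_eq_sinc, mul_comm w t, Complex.real_smul]
  have : (w : ℂ) ≠ 0 := by exact_mod_cast hw
  push_cast
  field_simp

/-- The signed measures `sin(tx) P(dx)` and `Δ t sinc(tw) (g ⋆ P)(dw)` have the same
characteristic function. -/
lemma char_sin_eq {g : ℝ → ℝ} (hg : Integrable g) {Δ : ℝ} {P : Measure ℝ}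
    [IsProbabilityMeasure P] (hP : IncrementLaw P Δ g) {t : ℝ} (ht : 0 < t) (u : ℝ) :
    ∫ x, sin (t * x) • Complex.exp (Complex.I * u * x) ∂P =
      ∫ p : ℝ × ℝ, (Δ * t * (sinc (t * (p.1 + p.2)) * g p.1)) •
        Complex.exp (Complex.I * u * (p.1 + p.2 : ℝ)) ∂((volume : Measure ℝ).prod P) := by
  set φ : ℝ → ℂ := fun u => ∫ x : ℝ, Complex.exp (Complex.I * u * x) ∂P with hφ
  set G : ℝ → ℝ × ℝ → ℂ := fun s p =>
    (g p.1 : ℂ) * Complex.exp (Complex.I * ((u + s : ℝ) : ℂ) * (p.1 + p.2 : ℝ)) with hG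
  have hgi : Integrable (fun p : ℝ × ℝ => (g p.1 : ℂ)) ((volume : Measure ℝ).prod P) :=
    (hg.comp_fst P).ofReal
  have hder : ∀ s ∈ Set.uIcc (-t) t, HasDerivAt (fun s => φ (u + s))
      (Δ * Complex.I * ∫ p, G s p ∂((volume : Measure ℝ).prod P)) s := fun s _ => by
    have h := hasDerivAt_char hg hP (u + s)
    rw [ft_mul_char] at h
    exact h.comp_const_add u s
  have hcont : Continuous fun s => ∫ p, G s p ∂((volume : Measure ℝ).prod P) := by
    refine continuous_of_dominated (bound := fun p => ‖(g p.1 : ℂ)‖) (fun s => ?_) (fun s => ?_)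
      hgi.norm (ae_of_all _ fun p => by fun_prop)
    · exact hgi.aestronglyMeasurable.mul (Continuous.aestronglyMeasurable (by fun_prop))
    · exact ae_of_all _ fun p => by rw [hG, norm_mul, norm_cexp_I_mul, mul_one]
  have hftc := intervalIntegral.integral_eq_sub_of_hasDerivAt hder
    ((continuous_const.mul hcont).intervalIntegrable _ _)
  have hswap : ∫ s in -t..t, ∫ p, G s p ∂((volume : Measure ℝ).prod P) =
      ∫ p, (∫ s in -t..t, G s p) ∂((volume : Measure ℝ).prod P) := by
    have htt : -t ≤ t := by linarith
    simp only [intervalIntegral.integral_of_le htt]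
    refine integral_integral_swap ?_
    have h1 : Integrable (fun q : ℝ × ℝ × ℝ => (g q.2.1 : ℂ))
        ((volume.restrict (Set.Ioc (-t) t)).prod ((volume : Measure ℝ).prod P)) :=
      hgi.comp_snd (volume.restrict (Set.Ioc (-t) t))
    refine h1.mono (h1.aestronglyMeasurable.mul (Continuous.aestronglyMeasurable (by fun_prop)))
      (ae_of_all _ fun q => ?_)
    rw [Function.uncurry, hG, norm_mul, norm_cexp_I_mul, mul_one]
  rw [intervalIntegral.integral_const_mul, hswap] at hftc
  have hint : ∀ v : ℝ, Integrable (fun x : ℝ => Complex.exp (Complex.I * v * x)) P := fun v =>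
    Integrable.of_bound (Continuous.aestronglyMeasurable (by fun_prop)) 1
      (ae_of_all _ fun x => (norm_cexp_I_mul v x).le)
  have hL : φ (u + t) - φ (u + -t) =
      2 * Complex.I * ∫ x, sin (t * x) • Complex.exp (Complex.I * u * x) ∂P := by
    rw [hφ]
    simp only
    rw [← integral_sub (hint _) (hint _), ← integral_const_mul]
    congr 1 with x
    have e1 : Complex.exp (Complex.I * ((u + t : ℝ) : ℂ) * x) = Complex.exp (Complex.I * u * x) *
        Complex.exp ((t * x : ℂ) * Complex.I) := by
      rw [← Complex.exp_add]; congr 1; push_cast; ring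
    have e2 : Complex.exp (Complex.I * ((u + -t : ℝ) : ℂ) * x) = Complex.exp (Complex.I * u * x) *
        Complex.exp (-(t * x : ℂ) * Complex.I) := by
      rw [← Complex.exp_add]; congr 1; push_cast; ring
    rw [e1, e2, Complex.real_smul]
    push_cast
    rw [Complex.sin]
    linear_combination (Complex.exp (Complex.I * u * x) *
        (Complex.exp ((t * x : ℂ) * Complex.I) - Complex.exp (-(t * x : ℂ) * Complex.I))) *
        Complex.I_sq
  have hR : ∫ p, (∫ s in -t..t, G s p) ∂((volume : Measure ℝ).prod P) =
      ∫ p : ℝ × ℝ, (2 * t * (sinc (t * (p.1 + p.2)) * g p.1)) •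
        Complex.exp (Complex.I * u * (p.1 + p.2 : ℝ)) ∂((volume : Measure ℝ).prod P) := by
    congr 1 with p
    rw [hG]
    simp only
    rw [intervalIntegral.integral_const_mul, integral_cexp_window, Complex.real_smul]
    push_cast
    ring
  have hR' : ∫ p : ℝ × ℝ, (Δ * t * (sinc (t * (p.1 + p.2)) * g p.1)) •
        Complex.exp (Complex.I * u * (p.1 + p.2 : ℝ)) ∂((volume : Measure ℝ).prod P) =
      (Δ / 2 : ℂ) * ∫ p : ℝ × ℝ, (2 * t * (sinc (t * (p.1 + p.2)) * g p.1)) •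
        Complex.exp (Complex.I * u * (p.1 + p.2 : ℝ)) ∂((volume : Measure ℝ).prod P) := by
    rw [← integral_const_mul]
    congr 1 with p
    simp only [Complex.real_smul]
    push_cast
    ring
  rw [hL, hR] at hftc
  rw [hR']
  refine mul_left_cancel₀ (mul_ne_zero two_ne_zero Complex.I_ne_zero) ?_
  rw [← hftc]
  ring

lemma integrable_sinc_mul {g : ℝ → ℝ} (hg : Integrable g) (P : Measure ℝ)
    [IsProbabilityMeasure P] (t : ℝ) :
    Integrable (fun p : ℝ × ℝ => sinc (t * (p.1 + p.2)) * g p.1)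
      ((volume : Measure ℝ).prod P) :=
  (hg.comp_fst P).bdd_mul (c := 1)
    (continuous_sinc.comp (by fun_prop)).aestronglyMeasurable
    (ae_of_all _ fun _ => abs_sinc_le_one _)

lemma sin_eq_mul_sinc {t : ℝ} (ht : t ≠ 0) (x : ℝ) : sin (t * x) = t * (x * sinc (t * x)) := by
  by_cases hx : x = 0
  · simp [hx]
  rw [sinc_of_ne_zero (mul_ne_zero ht hx)]
  field_simp

lemma integral_sinc_identity {g : ℝ → ℝ} (hg : Integrable g) {Δ : ℝ} {P : Measure ℝ}
    [IsProbabilityMeasure P] (hP : IncrementLaw P Δ g) {t : ℝ} (ht : 0 < t)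
    {f : ℝ → ℝ} (hf : Measurable f) {C : ℝ} (hC : ∀ x, |f x| ≤ C) :
    ∫ x, x * sinc (t * x) * f x ∂P =
      Δ * ∫ p : ℝ × ℝ, sinc (t * (p.1 + p.2)) * g p.1 * f (p.1 + p.2)
        ∂((volume : Measure ℝ).prod P) := by
  have ha₁ : Integrable (fun x => sin (t * x)) P :=
    Integrable.of_bound (Continuous.aestronglyMeasurable (by fun_prop)) 1
      (ae_of_all _ fun x => abs_sin_le_one _)
  have h := integral_comp_eq_of_char (X₁ := fun x : ℝ => x) (X₂ := fun p : ℝ × ℝ => p.1 + p.2)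
    measurable_id (by fun_prop) ha₁ ((integrable_sinc_mul hg P t).const_mul (Δ * t))
    (char_sin_eq hg hP ht) hf hC
  simp only [sin_eq_mul_sinc ht.ne', mul_assoc] at h
  rw [integral_const_mul, integral_const_mul, integral_const_mul] at h
  have h' : t * ∫ x, x * (sinc (t * x) * f x) ∂P =
      t * (Δ * ∫ p : ℝ × ℝ, sinc (t * (p.1 + p.2)) * (g p.1 * f (p.1 + p.2))
        ∂((volume : Measure ℝ).prod P)) := by rw [h]; ring
  simpa only [mul_assoc] using mul_left_cancel₀ ht.ne' h'

lemma exists_measurable_sign {s : ℝ → ℝ} (hs : Measurable s) :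
    ∃ f : ℝ → ℝ, Measurable f ∧ (∀ x, |f x| ≤ 1) ∧ ∀ x, s x * f x = |s x| := by
  refine ⟨fun x => if 0 ≤ s x then 1 else -1,
    Measurable.ite (measurableSet_le measurable_const hs) measurable_const measurable_const,
    fun x => ?_, fun x => ?_⟩
  · dsimp only; split_ifs <;> simp
  · dsimp only
    split_ifs with h
    · rw [abs_of_nonneg h, mul_one]
    · rw [abs_of_neg (not_le.1 h), mul_neg_one]

lemma abs_integral_prod_le {g : ℝ → ℝ} (hg : Integrable g) (P : Measure ℝ)
    [IsProbabilityMeasure P] {F : ℝ × ℝ → ℝ} (hF : ∀ p, |F p| ≤ |g p.1|) :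
    |∫ p, F p ∂((volume : Measure ℝ).prod P)| ≤ nl1 g := by
  have h := norm_integral_le_of_norm_le (f := F) (g := fun p => |g p.1|)
    (hg.abs.comp_fst P) (ae_of_all _ hF)
  have h2 := integral_prod_mul (μ := volume) (ν := P) (fun x => |g x|) (fun _ => (1 : ℝ))
  simp only [mul_one, integral_const, probReal_univ, smul_eq_mul] at h2
  rwa [h2] at h

lemma integral_abs_mul_sinc_le {g : ℝ → ℝ} (hg : Integrable g) {Δ : ℝ} (hΔ : 0 < Δ)
    {P : Measure ℝ} [IsProbabilityMeasure P] (hP : IncrementLaw P Δ g) {t : ℝ} (ht : 0 < t) :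
    ∫ x, |x * sinc (t * x)| ∂P ≤ Δ * nl1 g := by
  have hm : Measurable fun x : ℝ => x * sinc (t * x) :=
    measurable_id.mul (continuous_sinc.comp (by fun_prop)).measurable
  obtain ⟨f, hf, hf1, hfs⟩ := exists_measurable_sign hm
  have h := integral_sinc_identity hg hP ht hf hf1
  simp only [hfs] at h
  rw [h]
  refine mul_le_mul_of_nonneg_left ((le_abs_self _).trans (abs_integral_prod_le hg P fun p => ?_))
    hΔ.le
  rw [abs_mul, abs_mul]
  calc _ ≤ 1 * |g p.1| * 1 := by gcongr; exacts [abs_sinc_le_one _, hf1 _]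
    _ = _ := by ring

lemma tendsto_sinc_mul (w : ℝ) :
    Tendsto (fun n : ℕ => sinc (1 / ((n : ℝ) + 1) * w)) atTop (𝓝 1) := by
  have h : Tendsto (fun n : ℕ => 1 / ((n : ℝ) + 1) * w) atTop (𝓝 0) := by
    simpa using tendsto_one_div_add_atTop_nhds_zero_nat.mul_const w
  simpa [Function.comp_def] using (continuous_sinc.tendsto 0).comp h

/-- The increment has a finite first moment. -/
lemma integrable_id_increment {g : ℝ → ℝ} (hg : Integrable g) {Δ : ℝ} (hΔ : 0 < Δ)
    {P : Measure ℝ} [IsProbabilityMeasure P] (hP : IncrementLaw P Δ g) :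
    Integrable (fun x : ℝ => x) P := by
  have hc : ∀ t : ℝ, Continuous fun x : ℝ => x * sinc (t * x) := fun t =>
    continuous_id.mul (continuous_sinc.comp (by fun_prop))
  refine integrable_of_tendsto (G := fun n x => x * sinc (1 / ((n : ℝ) + 1) * x))
    (ae_of_all _ fun x => ?_) (fun n => (hc _).aestronglyMeasurable) ?_
  · simpa using (tendsto_sinc_mul x).const_mul x
  · refine ((Filter.liminf_le_of_frequently_le' (x := ENNReal.ofReal (Δ * nl1 g))
      (Frequently.of_forall fun n => ?_)).trans_lt ENNReal.ofReal_lt_top).ne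
    have ht : (0 : ℝ) < 1 / ((n : ℝ) + 1) := by positivity
    have hi : Integrable (fun x : ℝ => x * sinc (1 / ((n : ℝ) + 1) * x)) P := by
      refine Integrable.of_bound (hc _).aestronglyMeasurable (1 / ((n : ℝ) + 1))⁻¹
        (ae_of_all _ fun x => ?_)
      have h1 := abs_sin_le_one (1 / ((n : ℝ) + 1) * x)
      rw [sin_eq_mul_sinc ht.ne', abs_mul, abs_of_pos ht] at h1
      rw [Real.norm_eq_abs, ← one_div, le_div_iff₀' ht]
      exact h1
    rw [← ofReal_integral_norm_eq_lintegral_enorm hi]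
    exact ENNReal.ofReal_le_ofReal (integral_abs_mul_sinc_le hg hΔ hP ht)

/-- The size-biasing identity `E[Z f(Z)] = Δ ∫ g(y) E[f(y + Z)] dy`. -/
lemma integral_mul_increment {g : ℝ → ℝ} (hg : Integrable g) {Δ : ℝ} (hΔ : 0 < Δ)
    {P : Measure ℝ} [IsProbabilityMeasure P] (hP : IncrementLaw P Δ g)
    {f : ℝ → ℝ} (hf : Measurable f) {C : ℝ} (hC : ∀ x, |f x| ≤ C) :
    ∫ x, x * f x ∂P =
      Δ * ∫ p : ℝ × ℝ, g p.1 * f (p.1 + p.2) ∂((volume : Measure ℝ).prod P) := by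
  have hid := integrable_id_increment hg hΔ hP
  have hg' := hg.comp_fst P
  have hfp : Measurable fun p : ℝ × ℝ => f (p.1 + p.2) := hf.comp (by fun_prop)
  have hb : ∀ t w v : ℝ, |v * sinc t * f w| ≤ C * |v| := fun t w v => by
    rw [abs_mul, abs_mul]
    calc _ ≤ |v| * 1 * C := by gcongr; exacts [abs_sinc_le_one _, hC _]
      _ = _ := by ring
  have h1 : Tendsto (fun n : ℕ => ∫ x, x * sinc (1 / ((n : ℝ) + 1) * x) * f x ∂P) atTop
      (𝓝 (∫ x, x * f x ∂P)) := by
    refine tendsto_integral_of_dominated_convergence (fun x => C * |x|) (fun n => ?_)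
      (hid.abs.const_mul C) (fun n => ae_of_all _ fun x => hb _ _ _) (ae_of_all _ fun x => ?_)
    · exact ((measurable_id.mul (continuous_sinc.comp (by fun_prop)).measurable).mul
        hf).aestronglyMeasurable
    · simpa using ((tendsto_sinc_mul x).const_mul x).mul_const (f x)
  have h2 : Tendsto (fun n : ℕ => ∫ p : ℝ × ℝ, sinc (1 / ((n : ℝ) + 1) * (p.1 + p.2)) * g p.1 *
      f (p.1 + p.2) ∂((volume : Measure ℝ).prod P)) atTop
      (𝓝 (∫ p : ℝ × ℝ, g p.1 * f (p.1 + p.2) ∂((volume : Measure ℝ).prod P))) := by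
    refine tendsto_integral_of_dominated_convergence (fun p => C * |g p.1|) (fun n => ?_)
      (hg'.abs.const_mul C) (fun n => ae_of_all _ fun p => ?_) (ae_of_all _ fun p => ?_)
    · exact (integrable_sinc_mul hg P _).aestronglyMeasurable.mul hfp.aestronglyMeasurable
    · rw [mul_comm (sinc _)]; exact hb _ _ _
    · simpa using ((tendsto_sinc_mul (p.1 + p.2)).mul_const (g p.1)).mul_const (f (p.1 + p.2))
  refine tendsto_nhds_unique h1 ((h2.const_mul Δ).congr fun n => ?_)
  exact (integral_sinc_identity hg hP (by positivity) hf hC).symm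

lemma integral_abs_increment_le {g : ℝ → ℝ} (hg : Integrable g) {Δ : ℝ} (hΔ : 0 < Δ)
    {P : Measure ℝ} [IsProbabilityMeasure P] (hP : IncrementLaw P Δ g) :
    ∫ x, |x| ∂P ≤ Δ * nl1 g := by
  obtain ⟨f, hf, hf1, hfs⟩ := exists_measurable_sign measurable_id
  have h := integral_mul_increment hg hΔ hP hf hf1
  simp only [id] at hfs
  simp only [hfs] at h
  rw [h]
  refine mul_le_mul_of_nonneg_left ((le_abs_self _).trans (abs_integral_prod_le hg P fun p => ?_))
    hΔ.le
  rw [abs_mul]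
  exact mul_le_of_le_one_right (abs_nonneg _) (hf1 _)

lemma hfloor_lt {β : ℝ} (hβ : 0 < β) : (hfloor β : ℝ) < β := by
  have h1 : 0 < ⌈β⌉₊ := Nat.ceil_pos.2 hβ
  have h2 := Nat.ceil_lt_add_one hβ.le
  rw [hfloor, Nat.cast_sub h1]
  push_cast
  linarith

lemma hfloor_mono {α β : ℝ} (h : β ≤ α) : hfloor β ≤ hfloor α :=
  Nat.sub_le_sub_right (Nat.ceil_mono h) 1

lemma Holder.contDiff {β L : ℝ} {f : ℝ → ℝ} (hβ : 0 < β) (hf : Holder β L f) :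
    ContDiff ℝ (hfloor β) f := by
  refine contDiff_nat_iff_iteratedDeriv.2 ⟨fun m hm => ?_, hf.1⟩
  rcases hm.lt_or_eq with h | rfl
  · exact (hf.1 m h).continuous
  · have hγ : 0 < β - hfloor β := sub_pos.2 (hfloor_lt hβ)
    refine continuous_iff_continuousAt.2 fun x => tendsto_iff_dist_tendsto_zero.2 ?_
    refine squeeze_zero (fun _ => dist_nonneg) (fun y => hf.2 y x) ?_
    have hc : Continuous fun y => L * |y - x| ^ (β - (hfloor β : ℝ)) :=
      continuous_const.mul ((by fun_prop : Continuous fun y => |y - x|).rpow_const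
        fun _ => Or.inr hγ.le)
    simpa [hγ.ne'] using hc.tendsto x

/-- Taylor expansion in a Hölder class, with its remainder. -/
lemma Holder.taylor {β L : ℝ} {f : ℝ → ℝ} (hβ : 0 < β) (hL : 0 < L) (hf : Holder β L f)
    (x t : ℝ) :
    |f (x + t) - ∑ j ∈ range (hfloor β + 1), iteratedDeriv j f x * t ^ j / (j.factorial : ℝ)| ≤
      L / ((hfloor β).factorial : ℝ) * |t| ^ β := by
  have hγ : 0 < β - hfloor β := sub_pos.2 (hfloor_lt hβ)
  have hcd := hf.contDiff hβ
  have hH := hf.2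
  generalize hl : hfloor β = l at *
  obtain _ | k := l
  · simpa using hH (x + t) x
  have hcdx : ContDiff ℝ ((k + 1 : ℕ) : WithTop ℕ∞) fun z => f (x + z) :=
    hcd.comp (contDiff_const.add contDiff_id)
  set F : ℝ → ℝ := fun s => f (x + t * s) with hF
  have hFd : ∀ j ≤ k + 1, ∀ s, iteratedDeriv j F s = t ^ j * iteratedDeriv j f (x + t * s) := by
    intro j hj s
    have h := congrFun (iteratedDeriv_comp_const_mul (n := j)
      (hcdx.of_le (by exact_mod_cast hj)) t) s
    rw [iteratedDeriv_comp_const_add] at h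
    exact h
  have hFc : ContDiff ℝ ((k + 1 : ℕ) : WithTop ℕ∞) F := hcdx.comp (contDiff_const.mul contDiff_id)
  obtain ⟨ξ, hξ, hT⟩ := taylor_mean_remainder_lagrange_iteratedDeriv (f := F) (x := 1) (x₀ := 0)
    (n := k) zero_ne_one (by exact_mod_cast hFc.contDiffOn)
  have hu : UniqueDiffOn ℝ (Set.uIcc (0 : ℝ) 1) := uniqueDiffOn_uIcc zero_ne_one
  have hξ' : 0 < ξ ∧ ξ < 1 := by simpa [Set.uIoo] using hξ
  rw [taylor_within_apply] at hT
  have hsum : ∑ j ∈ range (k + 1), ((j.factorial : ℝ)⁻¹ * (1 - 0) ^ j) •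
      iteratedDerivWithin j F (Set.uIcc 0 1) 0 =
      ∑ j ∈ range (k + 1), iteratedDeriv j f x * t ^ j / (j.factorial : ℝ) := by
    refine sum_congr rfl fun j hj => ?_
    have hj' : j ≤ k + 1 := (mem_range.1 hj).le
    rw [iteratedDerivWithin_eq_iteratedDeriv hu
      ((hFc.of_le (by exact_mod_cast hj')).contDiffAt) Set.left_mem_uIcc, hFd j hj']
    simp
    ring
  rw [hsum, hFd _ le_rfl] at hT
  have hF1 : F 1 = f (x + t) := by simp [hF]
  rw [hF1] at hT
  have hrem : f (x + t) -
      ∑ j ∈ range (k + 1 + 1), iteratedDeriv j f x * t ^ j / (j.factorial : ℝ) =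
      t ^ (k + 1) * (iteratedDeriv (k + 1) f (x + t * ξ) - iteratedDeriv (k + 1) f x) /
        ((k + 1).factorial : ℝ) := by
    rw [sum_range_succ, ← sub_sub, hT]
    simp
    ring
  rw [hrem, abs_div, abs_mul, abs_pow, Nat.abs_cast]
  have hb : |iteratedDeriv (k + 1) f (x + t * ξ) - iteratedDeriv (k + 1) f x| ≤
      L * |t| ^ (β - ((k + 1 : ℕ) : ℝ)) := by
    refine (hH _ _).trans ?_
    have : |x + t * ξ - x| ≤ |t| := by
      rw [add_sub_cancel_left, abs_mul, abs_of_pos hξ'.1]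
      exact mul_le_of_le_one_right (abs_nonneg _) hξ'.2.le
    gcongr
  have hp : |t| ^ β = |t| ^ (k + 1) * |t| ^ (β - ((k + 1 : ℕ) : ℝ)) := by
    rw [← rpow_natCast, ← rpow_add_of_nonneg (abs_nonneg _) (by positivity) hγ.le]
    congr 1; ring
  calc _ ≤ |t| ^ (k + 1) * (L * |t| ^ (β - ((k + 1 : ℕ) : ℝ))) / ((k + 1).factorial : ℝ) := by
        gcongr
    _ = _ := by rw [hp]; ring

lemma integral_mul_sk (g K : ℝ → ℝ) {h : ℝ} (hh : 0 < h) (x : ℝ) :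
    ∫ y, g y * sk K h (x - y) = ∫ v, K v * g (x - h * v) := by
  rw [← integral_sub_left_eq_self (fun y => g y * sk K h (x - y)) volume x]
  have h1 := Measure.integral_comp_mul_left (fun w => g (x - w) * sk K h (x - (x - w))) h⁻¹⁻¹
  have h2 : ∀ v, g (x - h⁻¹⁻¹ * v) * sk K h (x - (x - h⁻¹⁻¹ * v)) =
      h⁻¹ * (K v * g (x - h * v)) := fun v => by
    rw [sk, inv_inv, sub_sub_cancel, mul_div_cancel_left₀ _ hh.ne']; ring
  simp only [h2] at h1
  rw [integral_const_mul, inv_inv, abs_of_pos (inv_pos.2 hh), smul_eq_mul] at h1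
  exact (mul_left_cancel₀ (inv_pos.2 hh).ne' h1).symm

lemma integrable_mul_shift {g K : ℝ → ℝ} (hg : Integrable g) (hK : K1 K) {h : ℝ} (hh : 0 < h)
    (x : ℝ) : Integrable fun v => K v * g (x - h * v) := by
  obtain ⟨hKm, -, -, ⟨C, hC⟩, -⟩ := hK
  exact ((hg.comp_sub_left x).comp_mul_left' hh.ne').bdd_mul (c := C) hKm.aestronglyMeasurable
    (ae_of_all _ fun v => hC ⟨v, rfl⟩)

lemma abs_sub_le_nsup_deriv {g : ℝ → ℝ} (hg : G5 g) (x y : ℝ) :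
    |g x - g y| ≤ nsup (deriv g) * |x - y| := by
  have h := Convex.norm_image_sub_le_of_norm_deriv_le (f := g) (C := nsup (deriv g))
    (s := Set.univ) (x := y) (y := x) (fun z _ => hg.1 z) (fun z _ => le_ciSup hg.2 z)
    convex_univ (Set.mem_univ _) (Set.mem_univ _)
  exact h

/-- The smoothed function `K_h ⋆ g` is Lipschitz. -/
lemma abs_smoothed_sub_le {g K : ℝ → ℝ} (hg : Integrable g) (hg5 : G5 g) (hK : K1 K) {h : ℝ}
    (hh : 0 < h) (x y : ℝ) :
    |(∫ v, K v * g (x - h * v)) - ∫ v, K v * g (y - h * v)| ≤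
      nsup (deriv g) * nl1 K * |x - y| := by
  rw [← integral_sub (integrable_mul_shift hg hK hh x) (integrable_mul_shift hg hK hh y)]
  rw [← Real.norm_eq_abs]
  refine (norm_integral_le_of_norm_le (g := fun v => |K v| * (nsup (deriv g) * |x - y|))
    (hK.2.1.abs.mul_const _) (ae_of_all _ fun v => ?_)).trans_eq ?_
  · rw [← mul_sub, norm_mul]
    refine mul_le_mul_of_nonneg_left ((abs_sub_le_nsup_deriv hg5 _ _).trans_eq ?_) (abs_nonneg _)
    rw [sub_sub_sub_cancel_right]
  · rw [integral_mul_const, nl1]; ring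

/-- Approximation error of the smoothed function in a Hölder class. -/
lemma abs_smoothed_sub_self_le {g K : ℝ → ℝ} {β L α : ℝ} (hβ : 0 < β) (hL : 0 < L)
    (hβα : β ≤ α) (hg : Integrable g) (hgH : Holder β L g) (hK : K1 K) (hK2 : K2 α K) {h : ℝ}
    (hh : 0 < h) (x : ℝ) :
    |(∫ v, K v * g (x - h * v)) - g x| ≤
      L / ((hfloor β).factorial : ℝ) * (∫ v, |K v| * |v| ^ β) * h ^ β := by
  obtain ⟨⟨hKi, hK1', hK0⟩, hKα⟩ := hK2
  have hle := hfloor_mono hβα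
  set c : ℕ → ℝ := fun j => iteratedDeriv j g x * (-h) ^ j / (j.factorial : ℝ) with hc
  have hterm : ∀ j ∈ range (hfloor β + 1), Integrable fun v => c j * (v ^ j * K v) :=
    fun j hj => (hKi j ((Nat.lt_succ_iff.1 (mem_range.1 hj)).trans hle)).const_mul _
  have hpoly : ∫ v, ∑ j ∈ range (hfloor β + 1), c j * (v ^ j * K v) = g x := by
    rw [integral_finsetSum _ hterm, sum_eq_single 0]
    · rw [integral_const_mul]; simp [hK1', hc]
    · intro j hj hj0
      rw [integral_const_mul, hK0 j (Nat.one_le_iff_ne_zero.2 hj0)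
        ((Nat.lt_succ_iff.1 (mem_range.1 hj)).trans hle), mul_zero]
    · simp
  have hKβ : Integrable fun v => |K v| * |v| ^ β := by
    refine (hK.2.1.abs.add hKα).mono' ?_ (ae_of_all _ fun v => ?_)
    · exact (hK.1.abs.mul (measurable_id.abs.pow_const β)).aestronglyMeasurable
    · have : |v| ^ β ≤ 1 + |v| ^ α := by
        rcases le_total |v| 1 with h1 | h1
        · have := rpow_le_one (abs_nonneg v) h1 hβ.le
          have := rpow_nonneg (abs_nonneg v) α
          linarith
        · have := rpow_le_rpow_of_exponent_le h1 hβα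
          linarith
      rw [Real.norm_of_nonneg (by positivity)]
      calc _ ≤ |K v| * (1 + |v| ^ α) := by gcongr
        _ = _ := by simp only [Pi.add_apply]; ring
  have hsub : (∫ v, K v * g (x - h * v)) - g x =
      ∫ v, (K v * g (x - h * v) - ∑ j ∈ range (hfloor β + 1), c j * (v ^ j * K v)) := by
    rw [integral_sub (integrable_mul_shift hg hK hh x) (integrable_finsetSum _ hterm), hpoly]
  rw [hsub, ← Real.norm_eq_abs]
  refine (norm_integral_le_of_norm_le
    (hKβ.const_mul (L / ((hfloor β).factorial : ℝ) * h ^ β)) (ae_of_all _ fun v => ?_)).trans_eq ?_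
  · have hT := hgH.taylor hβ hL x (-h * v)
    have e1 : K v * g (x - h * v) - ∑ j ∈ range (hfloor β + 1), c j * (v ^ j * K v) =
        K v * (g (x + -h * v) - ∑ j ∈ range (hfloor β + 1),
          iteratedDeriv j g x * (-h * v) ^ j / (j.factorial : ℝ)) := by
      rw [mul_sub, mul_sum, neg_mul, ← sub_eq_add_neg, ← neg_mul]
      congr 1
      refine sum_congr rfl fun j _ => ?_
      rw [hc, mul_pow]; ring
    rw [e1, norm_mul, Real.norm_eq_abs, Real.norm_eq_abs]
    rw [abs_mul, abs_neg, abs_of_pos hh, mul_rpow hh.le (abs_nonneg _)] at hT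
    calc _ ≤ |K v| * (L / ((hfloor β).factorial : ℝ) * (h ^ β * |v| ^ β)) := by gcongr
      _ = _ := by ring
  · rw [integral_const_mul]; ring

lemma exists_abs_sk_le {K : ℝ → ℝ} (hK : K1 K) {h : ℝ} (hh : 0 < h) :
    ∃ C, ∀ x, |sk K h x| ≤ C := by
  obtain ⟨C, hC⟩ := hK.2.2.2.1
  refine ⟨h⁻¹ * C, fun x => ?_⟩
  rw [sk, abs_mul, abs_of_pos (inv_pos.2 hh)]
  exact mul_le_mul_of_nonneg_left (hC ⟨_, rfl⟩) (inv_pos.2 hh).le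

lemma measurable_sk {K : ℝ → ℝ} (hK : K1 K) (h : ℝ) : Measurable (sk K h) :=
  (hK.1.comp (measurable_id.div_const h)).const_mul _

/-- The mean of the kernel estimator is `E[(K_h ⋆ g)(x₀ - Z)]`. -/
lemma mghat_eq {g K : ℝ → ℝ} (hg : Integrable g) (hK : K1 K) {h Δ : ℝ} (hh : 0 < h) (hΔ : 0 < Δ)
    {n : ℕ} (hn : 1 ≤ n) {P : Measure ℝ} [IsProbabilityMeasure P] (hP : IncrementLaw P Δ g)
    (x₀ : ℝ) :
    mghat K h Δ n P x₀ = ∫ z, (∫ v, K v * g (x₀ - z - h * v)) ∂P := by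
  obtain ⟨C, hC⟩ := exists_abs_sk_le hK hh
  have hf : Measurable fun z => sk K h (x₀ - z) := (measurable_sk hK h).comp (by fun_prop)
  have hint : Integrable (fun z => z * sk K h (x₀ - z)) P :=
    (integrable_id_increment hg hΔ hP).mul_bdd (c := C) hf.aestronglyMeasurable
      (ae_of_all _ fun z => hC _)
  have hn0 : (n : ℝ) ≠ 0 := by positivity
  have h1 : mghat K h Δ n P x₀ = Δ⁻¹ * ∫ z, z * sk K h (x₀ - z) ∂P := by
    simp only [mghat, ghat, pm]
    rw [integral_const_mul, integral_finsetSum]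
    · simp_rw [integral_comp_eval (μ := fun _ : Fin n => P) hint.aestronglyMeasurable]
      simp only [sum_const, card_univ, Fintype.card_fin, nsmul_eq_mul]
      field_simp
    · exact fun k _ => integrable_comp_eval (μ := fun _ : Fin n => P) hint
  rw [h1, integral_mul_increment hg hΔ hP hf (C := C) (fun z => hC _), inv_mul_cancel_left₀ hΔ.ne',
    integral_prod_symm]
  · congr 1 with z
    rw [← integral_mul_sk g K hh]
    congr 1 with y
    rw [sub_sub, add_comm]
  · exact (hg.comp_fst P).mul_bdd (c := C) (hf.comp (by fun_prop :
      Measurable fun p : ℝ × ℝ => p.1 + p.2)).aestronglyMeasurable (ae_of_all _ fun z => hC _)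

/-- Lemma 3.1 (bias bound). -/
theorem bias_bound (g K : ℝ → ℝ) (β L α x₀ : ℝ) (hx₀ : x₀ ≠ 0)
    (hβ : 0 < β) (hL : 0 < L) (hβα : β ≤ α)
    (hG3 : G3 1 g) (hG4 : Holder β L g) (hG5 : G5 g)
    (hK1 : K1 K) (hK2 : K2 α K)
    (h Δ : ℝ) (hh : 0 < h) (hΔ : 0 < Δ) (n : ℕ) (hn : 1 ≤ n)
    (P : Measure ℝ) [IsProbabilityMeasure P] (hP : IncrementLaw P Δ g) :
    (mghat K h Δ n P x₀ - g x₀) ^ 2 ≤ c1 K β L * h ^ (2 * β) + c1' K g * Δ ^ 2 := by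
  have hg : Integrable g := by
    refine (integrable_norm_iff hG5.1.continuous.aestronglyMeasurable).1 ?_
    simpa [G3] using hG3
  set A : ℝ → ℝ := fun x => ∫ v, K v * g (x - h * v) with hA
  have hid := integrable_id_increment hg hΔ hP
  have hM : 0 ≤ nsup (deriv g) := Real.iSup_nonneg fun _ => abs_nonneg _
  have hK0 : 0 ≤ nl1 K := integral_nonneg fun _ => abs_nonneg _
  have hg0 : 0 ≤ nl1 g := integral_nonneg fun _ => abs_nonneg _
  have hlip : ∀ z, |A (x₀ - z) - A x₀| ≤ nsup (deriv g) * nl1 K * |z| := fun z => by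
    simpa using abs_smoothed_sub_le hg hG5 hK1 hh (x₀ - z) x₀
  have hAc : Continuous A := by
    have : LipschitzWith (nsup (deriv g) * nl1 K).toNNReal A :=
      LipschitzWith.of_dist_le_mul fun x y => by
        rw [Real.coe_toNNReal _ (by positivity)]
        exact abs_smoothed_sub_le hg hG5 hK1 hh x y
    exact this.continuous
  have hdi : Integrable (fun z => A (x₀ - z) - A x₀) P :=
    (hid.abs.const_mul (nsup (deriv g) * nl1 K)).mono'
      (by fun_prop : Continuous fun z => A (x₀ - z) - A x₀).aestronglyMeasurable
      (ae_of_all _ hlip)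
  have hmean : mghat K h Δ n P x₀ - A x₀ = ∫ z, (A (x₀ - z) - A x₀) ∂P := by
    have hi : Integrable (fun z => A (x₀ - z)) P := by
      refine (hdi.add (integrable_const (A x₀))).congr (ae_of_all _ fun z => ?_)
      simp
    rw [integral_sub hi (integrable_const _), mghat_eq hg hK1 hh hΔ hn hP]
    simp [hA]
  have hvar : |mghat K h Δ n P x₀ - A x₀| ≤ 2 * nsup (deriv g) * nl1 g * nl1 K * Δ := by
    rw [hmean, ← Real.norm_eq_abs]
    refine (norm_integral_le_of_norm_le (hid.abs.const_mul (nsup (deriv g) * nl1 K))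
      (ae_of_all _ hlip)).trans ?_
    rw [integral_const_mul]
    calc _ ≤ nsup (deriv g) * nl1 K * (Δ * nl1 g) := by
          gcongr; exact integral_abs_increment_le hg hΔ hP
      _ ≤ 2 * (nsup (deriv g) * nl1 K * (Δ * nl1 g)) := by
          have : 0 ≤ nsup (deriv g) * nl1 K * (Δ * nl1 g) := by positivity
          linarith
      _ = _ := by ring
  have hbias : |A x₀ - g x₀| ≤
      L / ((hfloor β).factorial : ℝ) * (∫ v, |K v| * |v| ^ β) * h ^ β :=
    abs_smoothed_sub_self_le hβ hL hβα hg hG4 hK1 hK2 hh x₀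
  have hpow : h ^ (2 * β) = (h ^ β) ^ 2 := by
    rw [mul_comm, rpow_mul hh.le]; exact_mod_cast rfl
  have hs1 := sq_le_sq' (abs_le.1 hbias).1 (abs_le.1 hbias).2
  have hs2 := sq_le_sq' (abs_le.1 hvar).1 (abs_le.1 hvar).2
  rw [mul_pow] at hs1 hs2
  rw [c1, c1', hpow]
  calc (mghat K h Δ n P x₀ - g x₀) ^ 2
      = ((A x₀ - g x₀) + (mghat K h Δ n P x₀ - A x₀)) ^ 2 := by ring
    _ ≤ 2 * ((A x₀ - g x₀) ^ 2 + (mghat K h Δ n P x₀ - A x₀) ^ 2) := add_sq_le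
    _ ≤ _ := by linarith

end LevyAdapt
end
end

section
/- Moments of increments: let g(x) = xN(x) be the function associated with a Lévy density N, P_Δ the distribution with characteristic function exp(Δ ∫ (e^{iux} − 1) N(x) dx), and Z₁^Δ a random variable with law P_Δ. If p ≥ 1 is an integer with ∫_ℝ |x|^{p−1} |g(x)| dx < ∞, then E[|Z₁^Δ|^p] < ∞ and E[(Z₁^Δ)^p] = Δ ∫_ℝ x^{p−1} g(x) dx + o(Δ) as Δ → 0. Moreover, if g is integrable then E[|Z₁^Δ|] ≤ 2Δ ‖g‖₁. -/
open MeasureTheory Real Filter Finset Asymptotics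
open scoped Topology

noncomputable section

namespace LevyAdapt

/-! ### Finiteness of the first moment -/

lemma one_sub_cos_le_kernel (t : ℝ) : 1 - cos t ≤ 4 * t ^ 2 / (1 + t ^ 2) := by
  rw [le_div_iff₀ (by positivity)]
  have h1 := one_sub_sq_div_two_le_cos (x := t)
  have h2 := neg_one_le_cos t
  rcases le_total (t ^ 2) 1 with h | h
  · nlinarith [sq_nonneg t]
  · nlinarith

lemma one_sub_cos_div_sq_le {s c u : ℝ} (h : |s| ≤ c * |u|) :
    (1 - cos s) / u ^ 2 ≤ 4 * c ^ 2 * (1 + (c * u) ^ 2)⁻¹ := by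
  rcases eq_or_ne u 0 with rfl | hu
  · simp; positivity
  have hs : s ^ 2 ≤ (c * u) ^ 2 := by
    rw [← sq_abs s, mul_pow, ← sq_abs u, ← mul_pow]
    gcongr
  have hu2 : 0 < u ^ 2 := by positivity
  rw [div_le_iff₀ hu2]
  refine (one_sub_cos_le_kernel s).trans ?_
  rw [← div_eq_mul_inv, div_mul_eq_mul_div, div_le_div_iff₀ (by positivity) (by positivity)]
  nlinarith

lemma lintegral_kernel_le {c : ℝ} (hc : 0 ≤ c) :
    ∫⁻ u : ℝ, ENNReal.ofReal (4 * c ^ 2 * (1 + (c * u) ^ 2)⁻¹) ≤ ENNReal.ofReal (4 * π * c) := by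
  rcases hc.eq_or_lt with rfl | hc
  · simp
  have hi : Integrable fun u : ℝ => (1 + (c * u) ^ 2)⁻¹ :=
    integrable_inv_one_add_sq.comp_mul_left' hc.ne'
  rw [← ofReal_integral_eq_lintegral_ofReal (hi.const_mul _)
    (Eventually.of_forall fun u => by positivity), integral_const_mul,
    Measure.integral_comp_mul_left (fun u : ℝ => (1 + u ^ 2)⁻¹) c, integral_univ_inv_one_add_sq,
    abs_of_pos (by positivity)]
  apply ENNReal.ofReal_le_ofReal
  apply le_of_eq
  simp only [smul_eq_mul]
  field_simp

lemma abs_le_lintegral_one_sub_cos (z : ℝ) :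
    ENNReal.ofReal |z| ≤
      ENNReal.ofReal (π ^ 2 / 2) * ∫⁻ u : ℝ, ENNReal.ofReal ((1 - cos (u * z)) / u ^ 2) := by
  rcases eq_or_ne z 0 with rfl | hz
  · simp
  have hz' : 0 < |z| := abs_pos.2 hz
  have key : ENNReal.ofReal (2 / π ^ 2 * |z|) ≤
      ∫⁻ u : ℝ, ENNReal.ofReal ((1 - cos (u * z)) / u ^ 2) := by
    calc ENNReal.ofReal (2 / π ^ 2 * |z|)
        = ∫⁻ _ in Set.Ioc (0 : ℝ) (1 / |z|), ENNReal.ofReal (2 / π ^ 2 * z ^ 2) := by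
          rw [setLIntegral_const, Real.volume_Ioc, ← ENNReal.ofReal_mul (by positivity)]
          congr 1
          rw [← sq_abs z]
          field_simp
          ring
      _ ≤ ∫⁻ u in Set.Ioc (0 : ℝ) (1 / |z|), ENNReal.ofReal ((1 - cos (u * z)) / u ^ 2) := by
          refine setLIntegral_mono' measurableSet_Ioc fun u hu => ENNReal.ofReal_le_ofReal ?_
          have hu0 : 0 < u := hu.1
          rw [le_div_iff₀ (by positivity)]
          have h1 : |u * z| ≤ π := by
            rw [abs_mul, abs_of_pos hu0]
            have := (le_div_iff₀ hz').1 hu.2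
            linarith [pi_gt_three]
          have := cos_le_one_sub_mul_cos_sq h1
          nlinarith
      _ ≤ _ := setLIntegral_le_lintegral _ _
  calc ENNReal.ofReal |z| = ENNReal.ofReal (π ^ 2 / 2) * ENNReal.ofReal (2 / π ^ 2 * |z|) := by
        rw [← ENNReal.ofReal_mul (by positivity)]
        congr 1
        field_simp
    _ ≤ _ := by gcongr

lemma one_sub_exp_mul_cos_le {a b : ℝ} (ha : 0 ≤ a) :
    1 - exp (-a) * cos b ≤ a + (1 - cos b) := by
  have h1 : 1 - a ≤ exp (-a) := one_sub_le_exp_neg a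
  have h2 : exp (-a) ≤ 1 := exp_le_one_iff.2 (by linarith)
  nlinarith [cos_le_one b]

lemma norm_exp_I_sub_one_le (u x : ℝ) :
    ‖Complex.exp (Complex.I * u * x) - 1‖ ≤ |u| * |x| := by
  have := norm_exp_I_mul_ofReal_sub_one_le (x := u * x)
  rwa [Complex.ofReal_mul, ← mul_assoc, norm_eq_abs, abs_mul] at this

lemma aemeasurable_of_integrable_mul_id {N : ℝ → ℝ} (hN : Integrable fun x : ℝ => x * N x) :
    AEMeasurable N := by
  have h : AEMeasurable fun x : ℝ => x⁻¹ * (x * N x) := by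
    have := hN.1.aemeasurable
    fun_prop
  refine h.congr ?_
  have h0 : ∀ᵐ x : ℝ, x ≠ 0 := by simp [ae_iff]
  filter_upwards [h0] with x hx
  field_simp

lemma integrable_exp_sub_one_mul {N : ℝ → ℝ} (hN : Integrable fun x : ℝ => x * N x) (u : ℝ) :
    Integrable fun x : ℝ => (Complex.exp (Complex.I * u * x) - 1) * (N x : ℂ) := by
  refine (hN.norm.const_mul |u|).mono' ?_ (Eventually.of_forall fun x => ?_)
  · have := aemeasurable_of_integrable_mul_id hN
    apply AEMeasurable.aestronglyMeasurable
    fun_prop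
  · rw [norm_mul, Complex.norm_real, norm_mul, ← mul_assoc]
    gcongr
    exact norm_exp_I_sub_one_le u x

/-- An increment law with integrable `x N(x)` has a finite first absolute moment. -/
lemma IncrementLawN.integrable_id {N : ℝ → ℝ} (hN0 : ∀ x, 0 ≤ N x)
    (hN : Integrable fun x : ℝ => x * N x) {P : Measure ℝ} [IsProbabilityMeasure P]
    {Δ : ℝ} (hΔ : 0 < Δ) (hP : IncrementLawN P Δ N) : Integrable (fun x : ℝ => x) P := by
  set G : ℝ := ∫ x, |x * N x| with hG
  have hG0 : 0 ≤ G := integral_nonneg fun x => abs_nonneg _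
  have hNm := aemeasurable_of_integrable_mul_id hN
  set a : ℝ → ℝ := fun u => ∫ x, (1 - cos (u * x)) * N x with ha
  have hare (u : ℝ) (x : ℝ) :
      ((Complex.exp (Complex.I * u * x) - 1) * (N x : ℂ)).re = -((1 - cos (u * x)) * N x) := by
    have : Complex.I * u * x = ((u * x : ℝ) : ℂ) * Complex.I := by push_cast; ring
    rw [this, Complex.re_mul_ofReal, Complex.sub_re, Complex.exp_ofReal_mul_I_re, Complex.one_re]
    ring
  have haint (u : ℝ) : Integrable fun x => (1 - cos (u * x)) * N x := by
    have := (integrable_exp_sub_one_mul hN u).re.neg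
    refine this.congr (Eventually.of_forall fun x => ?_)
    simp only [Pi.neg_apply, RCLike.re_to_complex]
    rw [hare, neg_neg]
  have ha0 (u : ℝ) : 0 ≤ a u :=
    integral_nonneg fun x => mul_nonneg (by linarith [cos_le_one (u * x)]) (hN0 x)
  set I : ℝ → ℂ := fun u => ∫ x : ℝ, (Complex.exp (Complex.I * u * x) - 1) * (N x : ℂ) with hI
  have hIre (u : ℝ) : (I u).re = -a u := by
    have h := integral_re (integrable_exp_sub_one_mul hN u)
    simp only [RCLike.re_to_complex] at h
    rw [hI, ← h, ha, ← integral_neg]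
    exact integral_congr_ae (Eventually.of_forall fun x => hare u x)
  have hIim (u : ℝ) : |(I u).im| ≤ G * |u| := by
    refine (Complex.abs_im_le_norm _).trans ((norm_integral_le_integral_norm _).trans ?_)
    rw [hG, mul_comm (integral _ _), ← integral_const_mul]
    refine integral_mono (integrable_exp_sub_one_mul hN u).norm (hN.norm.const_mul |u|) fun x => ?_
    simp only [norm_mul, Complex.norm_real, abs_mul, ← mul_assoc]
    exact mul_le_mul_of_nonneg_right (norm_exp_I_sub_one_le u x) (abs_nonneg _)
  have hcosint (u : ℝ) : Integrable (fun x : ℝ => 1 - cos (u * x)) P := by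
    refine Integrable.of_bound (by fun_prop) 2 (Eventually.of_forall fun x => ?_)
    rw [norm_eq_abs, abs_le]
    constructor <;> linarith [cos_le_one (u * x), neg_one_le_cos (u * x)]
  have hchar (u : ℝ) : ∫ x, (1 - cos (u * x)) ∂P = 1 - exp (-(Δ * a u)) * cos (Δ * (I u).im) := by
    have hint : Integrable (fun x : ℝ => Complex.exp (Complex.I * u * x)) P := by
      refine Integrable.of_bound (by fun_prop) 1 (Eventually.of_forall fun x => ?_)
      have : Complex.I * u * x = ((u * x : ℝ) : ℂ) * Complex.I := by push_cast; ring
      rw [this, Complex.norm_exp_ofReal_mul_I]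
    have h := integral_re hint
    simp only [RCLike.re_to_complex] at h
    rw [hP u, Complex.exp_re, Complex.re_ofReal_mul, Complex.im_ofReal_mul] at h
    change _ = rexp (Δ * (I u).re) * cos (Δ * (I u).im) at h
    rw [hIre, mul_neg] at h
    have hc : Integrable (fun x : ℝ => cos (u * x)) P :=
      ((integrable_const (1 : ℝ)).sub (hcosint u)).congr (Eventually.of_forall fun x => by simp)
    rw [integral_sub (integrable_const 1) hc, ← h]
    simp only [integral_const, probReal_univ, smul_eq_mul, mul_one, sub_right_inj]
    refine integral_congr_ae (Eventually.of_forall fun x => ?_)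
    have : Complex.I * u * x = ((u * x : ℝ) : ℂ) * Complex.I := by push_cast; ring
    simp only [this, Complex.exp_ofReal_mul_I_re]
  have hbound (u : ℝ) : ∫⁻ x, ENNReal.ofReal ((1 - cos (u * x)) / u ^ 2) ∂P ≤
      (∫⁻ x, ENNReal.ofReal Δ * (ENNReal.ofReal ((1 - cos (u * x)) / u ^ 2) *
          ENNReal.ofReal (N x))) +
        ENNReal.ofReal (4 * (Δ * G) ^ 2 * (1 + (Δ * G * u) ^ 2)⁻¹) := by
    have h1 (x : ℝ) : 0 ≤ 1 - cos (u * x) := by linarith [cos_le_one (u * x)]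
    rw [← ofReal_integral_eq_lintegral_ofReal ((hcosint u).div_const _)
      (Eventually.of_forall fun x => div_nonneg (h1 x) (sq_nonneg u)), integral_div, hchar]
    have h2 : (∫⁻ x, ENNReal.ofReal Δ * (ENNReal.ofReal ((1 - cos (u * x)) / u ^ 2) *
          ENNReal.ofReal (N x))) = ENNReal.ofReal (Δ * a u / u ^ 2) := by
      rw [lintegral_const_mul' _ _ ENNReal.ofReal_ne_top, mul_div_assoc, ENNReal.ofReal_mul hΔ.le,
        ha, ← integral_div, ofReal_integral_eq_lintegral_ofReal ((haint u).div_const _)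
          (Eventually.of_forall fun x => div_nonneg (mul_nonneg (h1 x) (hN0 x)) (sq_nonneg u))]
      congr 1
      refine lintegral_congr fun x => ?_
      rw [← ENNReal.ofReal_mul (div_nonneg (h1 x) (sq_nonneg u))]
      congr 1
      ring
    rw [h2, ← ENNReal.ofReal_add (by have := ha0 u; positivity) (by positivity)]
    apply ENNReal.ofReal_le_ofReal
    have h3 : |Δ * (I u).im| ≤ Δ * G * |u| := by
      rw [abs_mul, abs_of_pos hΔ, mul_assoc]
      exact mul_le_mul_of_nonneg_left (hIim u) hΔ.le
    calc _ ≤ (Δ * a u + (1 - cos (Δ * (I u).im))) / u ^ 2 := by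
          gcongr
          exact one_sub_exp_mul_cos_le (mul_nonneg hΔ.le (ha0 u))
      _ ≤ _ := by
          rw [add_div]
          gcongr
          exact one_sub_cos_div_sq_le h3
  refine ⟨by fun_prop, ?_⟩
  rw [hasFiniteIntegral_iff_norm]
  calc ∫⁻ z, ENNReal.ofReal ‖z‖ ∂P
      ≤ ∫⁻ z, ENNReal.ofReal (π ^ 2 / 2) *
          (∫⁻ u : ℝ, ENNReal.ofReal ((1 - cos (u * z)) / u ^ 2)) ∂P :=
        lintegral_mono abs_le_lintegral_one_sub_cos
    _ = ENNReal.ofReal (π ^ 2 / 2) *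
          ∫⁻ u : ℝ, ∫⁻ z, ENNReal.ofReal ((1 - cos (u * z)) / u ^ 2) ∂P := by
        rw [lintegral_const_mul' _ _ ENNReal.ofReal_ne_top]
        congr 1
        apply lintegral_lintegral_swap
        apply Measurable.aemeasurable
        unfold Function.uncurry
        fun_prop
    _ ≤ ENNReal.ofReal (π ^ 2 / 2) * (ENNReal.ofReal Δ * (∫⁻ x, ENNReal.ofReal (4 * π * |x|) *
          ENNReal.ofReal (N x)) + ENNReal.ofReal (4 * π * (Δ * G))) := by
        gcongr
        refine (lintegral_mono hbound).trans ?_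
        rw [lintegral_add_right _ (by fun_prop)]
        gcongr
        · rw [lintegral_lintegral_swap]
          · rw [← lintegral_const_mul' _ _ ENNReal.ofReal_ne_top]
            refine lintegral_mono fun x => ?_
            rw [lintegral_const_mul' _ _ ENNReal.ofReal_ne_top,
              lintegral_mul_const' _ _ ENNReal.ofReal_ne_top]
            gcongr
            refine (lintegral_mono fun u => ENNReal.ofReal_le_ofReal ?_).trans
              (lintegral_kernel_le (abs_nonneg x))
            exact one_sub_cos_div_sq_le (by rw [abs_mul, mul_comm])
          · have := hNm.comp_snd (μ := (volume : Measure ℝ))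
            unfold Function.uncurry
            fun_prop
        · exact lintegral_kernel_le (by positivity)
    _ < ⊤ := by
        refine ENNReal.mul_lt_top ENNReal.ofReal_lt_top (ENNReal.add_lt_top.2
          ⟨ENNReal.mul_lt_top ENNReal.ofReal_lt_top ?_, ENNReal.ofReal_lt_top⟩)
        have h := (hN.norm.const_mul (4 * π)).lintegral_lt_top
        refine lt_of_le_of_lt (lintegral_mono fun x => ?_) h
        rw [← ENNReal.ofReal_mul (by positivity), norm_mul, norm_eq_abs, norm_eq_abs,
          abs_of_nonneg (hN0 x), mul_assoc]

/-! ### The size-biasing identity -/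

lemma isFiniteMeasure_withDensity_ofReal_neg {α : Type*} [MeasurableSpace α] {μ : Measure α}
    {f : α → ℝ} (hf : Integrable f μ) :
    IsFiniteMeasure (μ.withDensity fun x => ENNReal.ofReal (-f x)) :=
  isFiniteMeasure_withDensity_ofReal hf.neg.2

lemma integral_withDensity_ofReal_sub {α E : Type*} [MeasurableSpace α] {μ : Measure α}
    [NormedAddCommGroup E] [NormedSpace ℝ E] {f : α → ℝ} {h : α → E} (hf : AEMeasurable f μ)
    (hh : AEStronglyMeasurable h μ) (hfh : Integrable (fun x => f x • h x) μ) :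
    ∫ x, h x ∂(μ.withDensity fun x => ENNReal.ofReal (f x)) -
      ∫ x, h x ∂(μ.withDensity fun x => ENNReal.ofReal (-f x)) = ∫ x, f x • h x ∂μ := by
  have hint {e : α → ℝ} (he : AEMeasurable e μ) (hef : ∀ x, |e x| ≤ |f x|) :
      Integrable (fun x => e x • h x) μ := by
    refine hfh.mono (he.aestronglyMeasurable.smul hh) (Eventually.of_forall fun x => ?_)
    rw [norm_smul, norm_smul]
    exact mul_le_mul_of_nonneg_right (hef x) (norm_nonneg _)
  rw [integral_withDensity_eq_integral_toReal_smul₀ hf.ennreal_ofReal (by simp),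
    integral_withDensity_eq_integral_toReal_smul₀ (f := fun x => ENNReal.ofReal (-f x))
      hf.neg.ennreal_ofReal (by simp),
    ← integral_sub]
  · refine integral_congr_ae (Eventually.of_forall fun x => ?_)
    simp only [ENNReal.toReal_ofReal', ← sub_smul]
    congr 1
    rcases le_total 0 (f x) with hx | hx <;> simp [hx]
  · simp only [ENNReal.toReal_ofReal']
    exact hint (hf.max aemeasurable_const) fun x => by
      rcases le_total 0 (f x) with hx | hx <;> simp [hx]
  · simp only [ENNReal.toReal_ofReal']
    exact hint (hf.neg.max aemeasurable_const) fun x => by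
      rcases le_total 0 (f x) with hx | hx <;> simp [hx]

lemma hasDerivAt_integral_exp_sub_one_mul {μ : Measure ℝ} {N : ℝ → ℝ} (hNm : AEMeasurable N μ)
    (hN : Integrable (fun x : ℝ => x * N x) μ) (u : ℝ) :
    HasDerivAt (fun u : ℝ => ∫ x : ℝ, (Complex.exp (Complex.I * u * x) - 1) * (N x : ℂ) ∂μ)
      (Complex.I * ∫ x : ℝ, Complex.exp (Complex.I * u * x) * ((x * N x : ℝ) : ℂ) ∂μ) u := by
  rw [← integral_const_mul]
  refine (hasDerivAt_integral_of_dominated_loc_of_deriv_le (s := Set.univ) univ_mem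
    (bound := fun x => ‖x * N x‖)
    (F' := fun (u x : ℝ) =>
      Complex.I * (Complex.exp (Complex.I * u * x) * ((x * N x : ℝ) : ℂ)))
    (Eventually.of_forall fun v => AEMeasurable.aestronglyMeasurable (by fun_prop)) ?_
    (AEMeasurable.aestronglyMeasurable (by fun_prop))
    (Eventually.of_forall fun x v _ => ?_) hN.norm (Eventually.of_forall fun x v _ => ?_)).2
  · refine (hN.norm.const_mul |u|).mono' (AEMeasurable.aestronglyMeasurable (by fun_prop))
      (Eventually.of_forall fun x => ?_)
    rw [norm_mul, Complex.norm_real, norm_mul, ← mul_assoc]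
    exact mul_le_mul_of_nonneg_right (norm_exp_I_sub_one_le u x) (norm_nonneg _)
  · have : Complex.I * v * x = ((v * x : ℝ) : ℂ) * Complex.I := by push_cast; ring
    rw [this, norm_mul, norm_mul, Complex.norm_exp_ofReal_mul_I, Complex.norm_I,
      Complex.norm_real, one_mul, one_mul]
  · have h1 : HasDerivAt (fun v : ℝ => Complex.I * (v : ℂ) * (x : ℂ)) (Complex.I * 1 * x) v :=
      ((Complex.ofRealCLM.hasDerivAt (x := v)).const_mul Complex.I).mul_const (x : ℂ)
    convert! (h1.cexp.sub_const 1).mul_const (N x : ℂ) using 1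
    push_cast
    ring

/-- The Fourier form of the size-biasing identity `x P(dx) = Δ (g ∗ P)(dx)`. -/
lemma IncrementLawN.integral_exp_mul_id {N : ℝ → ℝ} (hN : Integrable fun x : ℝ => x * N x)
    {P : Measure ℝ} [IsProbabilityMeasure P] {Δ : ℝ} (hP : IncrementLawN P Δ N)
    (hid : Integrable (fun x : ℝ => x) P) (u : ℝ) :
    ∫ x : ℝ, Complex.exp (Complex.I * u * x) * (x : ℂ) ∂P =
      Δ * (∫ x : ℝ, Complex.exp (Complex.I * u * x) * ((x * N x : ℝ) : ℂ)) * charFun P u := by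
  have hchar (v : ℝ) : charFun P v = ∫ x : ℝ, Complex.exp (Complex.I * v * x) ∂P := by
    rw [charFun_apply_real]
    congr! 3 with x
    ring
  have h1 := hasDerivAt_integral_exp_sub_one_mul (μ := P) (N := fun _ => 1) aemeasurable_const
    (by simpa using hid) u
  have h2 := ((hasDerivAt_integral_exp_sub_one_mul (aemeasurable_of_integrable_mul_id hN) hN
    u).const_mul (Δ : ℂ)).cexp.sub_const 1
  have heq : (fun u : ℝ => ∫ x : ℝ, (Complex.exp (Complex.I * u * x) - 1) * ((1 : ℝ) : ℂ) ∂P) =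
      fun u : ℝ => Complex.exp ((Δ : ℂ) *
        ∫ x : ℝ, (Complex.exp (Complex.I * u * x) - 1) * (N x : ℂ)) - 1 := by
    funext v
    rw [← hP v]
    have hint : Integrable (fun x : ℝ => Complex.exp (Complex.I * v * x)) P := by
      refine Integrable.of_bound (by fun_prop) 1 (Eventually.of_forall fun x => ?_)
      have : Complex.I * v * x = ((v * x : ℝ) : ℂ) * Complex.I := by push_cast; ring
      rw [this, Complex.norm_exp_ofReal_mul_I]
    simp [integral_sub hint (integrable_const _)]
  rw [heq] at h1
  have h := h1.unique h2
  rw [← hP u, ← hchar] at h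
  simp only [mul_one] at h
  refine mul_left_cancel₀ Complex.I_ne_zero (h.trans ?_)
  ring

/-- The size-biasing identity `x P(dx) = Δ (g ∗ P)(dx)`, with the signed measures on both sides
split into their positive and negative parts. -/
lemma IncrementLawN.withDensity_id_add_eq {N : ℝ → ℝ} (hN : Integrable fun x : ℝ => x * N x)
    {P : Measure ℝ} [IsProbabilityMeasure P] {Δ : ℝ} (hΔ : 0 < Δ) (hP : IncrementLawN P Δ N)
    (hid : Integrable (fun x : ℝ => x) P) :
    (P.withDensity fun x => ENNReal.ofReal x) +
        Δ.toNNReal • ((volume.withDensity fun x => ENNReal.ofReal (-(x * N x))) ∗ P) =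
      (P.withDensity fun x => ENNReal.ofReal (-x)) +
        Δ.toNNReal • ((volume.withDensity fun x => ENNReal.ofReal (x * N x)) ∗ P) := by
  have := isFiniteMeasure_withDensity_ofReal hid.2
  have := isFiniteMeasure_withDensity_ofReal_neg hid
  have := isFiniteMeasure_withDensity_ofReal hN.2
  have := isFiniteMeasure_withDensity_ofReal_neg hN
  have hdiff {μ : Measure ℝ} {f : ℝ → ℝ} (hf : Integrable f μ) (u : ℝ) :
      charFun (μ.withDensity fun x => ENNReal.ofReal (f x)) u -
        charFun (μ.withDensity fun x => ENNReal.ofReal (-f x)) u =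
      ∫ x : ℝ, Complex.exp (Complex.I * u * x) * (f x : ℂ) ∂μ := by
    rw [charFun_apply_real, charFun_apply_real, integral_withDensity_ofReal_sub hf.1.aemeasurable
      (by fun_prop)]
    · refine integral_congr_ae (Eventually.of_forall fun x => ?_)
      simp only [Complex.real_smul]
      rw [mul_comm]
      congr 2
      ring
    · refine hf.mono ?_ (Eventually.of_forall fun x => ?_)
      · exact hf.1.smul (by fun_prop)
      · rw [← Complex.ofReal_mul, norm_smul, Complex.norm_exp_ofReal_mul_I, mul_one]
  refine Measure.ext_of_charFun (funext fun u => ?_)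
  have hadd {μ ν : Measure ℝ} [IsFiniteMeasure μ] [IsFiniteMeasure ν] :
      charFun (μ + Δ.toNNReal • ν) u = charFun μ u + Δ * charFun ν u := by
    have hint (μ : Measure ℝ) [IsFiniteMeasure μ] :
        Integrable (fun x : ℝ => Complex.exp (u * x * Complex.I)) μ := by
      refine Integrable.of_bound (by fun_prop) 1 (Eventually.of_forall fun x => ?_)
      rw [← Complex.ofReal_mul, Complex.norm_exp_ofReal_mul_I]
    rw [charFun_apply_real, integral_add_measure (hint _) (hint _), integral_smul_nnreal_measure,
      charFun_apply_real, charFun_apply_real, NNReal.smul_def, Real.coe_toNNReal _ hΔ.le,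
      Complex.real_smul]
  rw [hadd, hadd, charFun_conv, charFun_conv]
  have h1 := hdiff hid u
  have h2 := hdiff hN u
  rw [hP.integral_exp_mul_id hN hid u, ← h2] at h1
  linear_combination h1

/-! ### Moment bounds -/

lemma withDensity_ofReal_add_neg {α : Type*} [MeasurableSpace α] {μ : Measure α} {f : α → ℝ}
    (hf : AEMeasurable f μ) :
    (μ.withDensity fun x => ENNReal.ofReal (f x)) + (μ.withDensity fun x => ENNReal.ofReal (-f x)) =
      μ.withDensity fun x => ‖f x‖ₑ := by
  ext s hs
  rw [Measure.add_apply, withDensity_apply _ hs, withDensity_apply _ hs, withDensity_apply _ hs,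
    ← lintegral_add_left' hf.restrict.ennreal_ofReal]
  refine lintegral_congr fun x => ?_
  rw [← ofReal_norm, norm_eq_abs]
  rcases le_total 0 (f x) with hx | hx <;>
    simp [hx, abs_of_nonneg, abs_of_nonpos, ENNReal.ofReal_of_nonpos]

lemma withDensity_ofReal_conv_add_neg {f : ℝ → ℝ} (hf : Integrable f) (P : Measure ℝ) [SFinite P] :
    (volume.withDensity fun x => ENNReal.ofReal (f x)) ∗ P +
        (volume.withDensity fun x => ENNReal.ofReal (-f x)) ∗ P =
      (volume.withDensity fun x => ‖f x‖ₑ) ∗ P := by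
  have := isFiniteMeasure_withDensity_ofReal hf.2
  have := isFiniteMeasure_withDensity_ofReal_neg hf
  rw [← Measure.add_conv, withDensity_ofReal_add_neg hf.1.aemeasurable]

lemma measure_le_of_add_eq_add {α : Type*} [MeasurableSpace α] {μ₁ μ₂ ρ₁ ρ₂ : Measure α}
    (h : μ₁ + ρ₁ = μ₂ + ρ₂) {t : Set α} (h₁ : μ₁ t = 0) (h₂ : μ₂ tᶜ = 0) : μ₁ ≤ ρ₂ := by
  refine Measure.le_iff.2 fun s _ => ?_
  calc μ₁ s = μ₁ (s \ t) := (measure_sdiff_null h₁).symm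
    _ ≤ (μ₁ + ρ₁) (s \ t) := by rw [Measure.add_apply]; exact le_self_add
    _ = ρ₂ (s \ t) := by
        rw [h, Measure.add_apply, measure_mono_null (fun x hx => hx.2) h₂, zero_add]
    _ ≤ ρ₂ s := measure_mono Set.sdiff_subset

/-- The size-biased law `|x| P(dx)` is dominated by `Δ (|g| ∗ P)(dx)`. -/
lemma IncrementLawN.withDensity_enorm_le {N : ℝ → ℝ} (hN : Integrable fun x : ℝ => x * N x)
    {P : Measure ℝ} [IsProbabilityMeasure P] {Δ : ℝ} (hΔ : 0 < Δ) (hP : IncrementLawN P Δ N)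
    (hid : Integrable (fun x : ℝ => x) P) :
    (P.withDensity fun x => ‖x‖ₑ) ≤
      Δ.toNNReal • ((volume.withDensity fun x => ‖x * N x‖ₑ) ∗ P) := by
  have hid_eq := hP.withDensity_id_add_eq hN hΔ hid
  have hpos : (P.withDensity fun x => ENNReal.ofReal x) (Set.Iic 0) = 0 := by
    rw [withDensity_apply _ measurableSet_Iic]
    exact setLIntegral_eq_zero measurableSet_Iic fun x hx => ENNReal.ofReal_of_nonpos hx
  have hneg : (P.withDensity fun x => ENNReal.ofReal (-x)) (Set.Iic 0)ᶜ = 0 := by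
    rw [withDensity_apply _ measurableSet_Iic.compl]
    exact setLIntegral_eq_zero measurableSet_Iic.compl fun x hx =>
      ENNReal.ofReal_of_nonpos (neg_nonpos.2 (not_le.1 (Set.mem_Iic.not.1 hx)).le)
  rw [← withDensity_ofReal_conv_add_neg hN P, ← withDensity_ofReal_add_neg hid.1.aemeasurable,
    smul_add]
  exact add_le_add (measure_le_of_add_eq_add hid_eq hpos hneg)
    (measure_le_of_add_eq_add hid_eq.symm hneg (by rwa [compl_compl]))

lemma enorm_add_pow_le (x y : ℝ) (k : ℕ) : ‖x + y‖ₑ ^ k ≤ 2 ^ k * (‖x‖ₑ ^ k + ‖y‖ₑ ^ k) := by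
  have h : ‖x + y‖ₑ ≤ 2 * max ‖x‖ₑ ‖y‖ₑ :=
    (enorm_add_le x y).trans (by rw [two_mul]; gcongr <;> simp)
  calc ‖x + y‖ₑ ^ k ≤ (2 * max ‖x‖ₑ ‖y‖ₑ) ^ k := by gcongr
    _ = 2 ^ k * max ‖x‖ₑ ‖y‖ₑ ^ k := mul_pow _ _ _
    _ ≤ _ := by
        gcongr
        rcases le_total ‖x‖ₑ ‖y‖ₑ with h | h <;> simp [h]

lemma lintegral_enorm_pow_conv_le (μ ν : Measure ℝ) [SFinite μ] [IsProbabilityMeasure ν] (k : ℕ) :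
    ∫⁻ x, ‖x‖ₑ ^ k ∂(μ ∗ ν) ≤
      2 ^ k * (∫⁻ x, ‖x‖ₑ ^ k ∂μ + μ Set.univ * ∫⁻ x, ‖x‖ₑ ^ k ∂ν) := by
  rw [Measure.lintegral_conv (by fun_prop)]
  calc _ ≤ ∫⁻ x, ∫⁻ y, 2 ^ k * (‖x‖ₑ ^ k + ‖y‖ₑ ^ k) ∂ν ∂μ :=
        lintegral_mono fun x => lintegral_mono fun y => enorm_add_pow_le x y k
    _ = _ := by
        simp_rw [lintegral_const_mul' _ _ (ENNReal.pow_ne_top ENNReal.ofNat_ne_top)]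
        congr 1
        simp_rw [lintegral_add_left measurable_const]
        rw [lintegral_add_right _ measurable_const]
        simp [mul_comm]

lemma IncrementLawN.lintegral_enorm_pow_succ_le {N : ℝ → ℝ}
    (hN : Integrable fun x : ℝ => x * N x) {P : Measure ℝ} [IsProbabilityMeasure P] {Δ : ℝ}
    (hΔ : 0 < Δ) (hP : IncrementLawN P Δ N) (hid : Integrable (fun x : ℝ => x) P) (k : ℕ) :
    ∫⁻ x, ‖x‖ₑ ^ (k + 1) ∂P ≤
      ENNReal.ofReal Δ * ∫⁻ x, ‖x‖ₑ ^ k ∂((volume.withDensity fun x => ‖x * N x‖ₑ) ∗ P) := by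
  calc ∫⁻ x, ‖x‖ₑ ^ (k + 1) ∂P = ∫⁻ x, ‖x‖ₑ ^ k ∂(P.withDensity fun x => ‖x‖ₑ) := by
        rw [lintegral_withDensity_eq_lintegral_mul _ (by fun_prop) (by fun_prop)]
        simp only [pow_succ', Pi.mul_apply]
    _ ≤ _ := lintegral_mono' (hP.withDensity_enorm_le hN hΔ hid) le_rfl
    _ = _ := by rw [lintegral_smul_measure]; rfl

lemma lintegral_enorm_pow_withDensity_lt_top {f : ℝ → ℝ} (hf : AEMeasurable f) {k : ℕ}
    (hk : Integrable fun x : ℝ => x ^ k * f x) :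
    ∫⁻ x, ‖x‖ₑ ^ k ∂(volume.withDensity fun x => ‖f x‖ₑ) < ⊤ := by
  rw [lintegral_withDensity_eq_lintegral_mul₀ hf.enorm (by fun_prop)]
  have := hk.2
  simpa [hasFiniteIntegral_iff_enorm, enorm_mul, enorm_pow, mul_comm] using this

/-- Moments of order at most `p` of the increment laws are `O(Δ)`, locally uniformly in `Δ`. -/
lemma exists_lintegral_enorm_pow_le {N : ℝ → ℝ} (hN0 : ∀ x, 0 ≤ N x) {p : ℕ}
    (hN : ∀ k < p, Integrable fun x : ℝ => x ^ k * (x * N x)) (D : ℝ) {k : ℕ} (hk : k < p) :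
    ∃ C : ENNReal, C ≠ ⊤ ∧ ∀ (P : Measure ℝ) [IsProbabilityMeasure P] (Δ : ℝ), 0 < Δ → Δ ≤ D →
      IncrementLawN P Δ N →
        ∫⁻ x, ‖x‖ₑ ^ k ∂((volume.withDensity fun x => ‖x * N x‖ₑ) ∗ P) ≤ C ∧
        ∫⁻ x, ‖x‖ₑ ^ (k + 1) ∂P ≤ ENNReal.ofReal Δ * C := by
  have hN' : Integrable fun x : ℝ => x * N x := by simpa using hN 0 (by omega)
  have hfin : IsFiniteMeasure (volume.withDensity fun x => ‖x * N x‖ₑ) :=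
    isFiniteMeasure_withDensity hN'.2.ne
  have step {k : ℕ} (hk : k < p) {C : ENNReal} (hC : C ≠ ⊤) : ∃ C' : ENNReal, C' ≠ ⊤ ∧
      ∀ (P : Measure ℝ) [IsProbabilityMeasure P] (Δ : ℝ), 0 < Δ → IncrementLawN P Δ N →
        ∫⁻ x, ‖x‖ₑ ^ k ∂P ≤ C →
          ∫⁻ x, ‖x‖ₑ ^ k ∂((volume.withDensity fun x => ‖x * N x‖ₑ) ∗ P) ≤ C' ∧
          ∫⁻ x, ‖x‖ₑ ^ (k + 1) ∂P ≤ ENNReal.ofReal Δ * C' := by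
    refine ⟨2 ^ k * (∫⁻ x, ‖x‖ₑ ^ k ∂(volume.withDensity fun x => ‖x * N x‖ₑ) +
        (volume.withDensity fun x => ‖x * N x‖ₑ) Set.univ * C), ?_, fun P _ Δ hΔ hP h => ?_⟩
    · have h1 := (lintegral_enorm_pow_withDensity_lt_top hN'.1.aemeasurable (hN k hk)).ne
      have h2 := measure_ne_top (volume.withDensity fun x => ‖x * N x‖ₑ) Set.univ
      finiteness
    · have hconv := (lintegral_enorm_pow_conv_le (volume.withDensity fun x => ‖x * N x‖ₑ) P
        k).trans (mul_le_mul_right (add_le_add_right (mul_le_mul_right h _) _) _)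
      exact ⟨hconv, (hP.lintegral_enorm_pow_succ_le hN' hΔ (hP.integrable_id hN0 hN' hΔ) k).trans
        (mul_le_mul_right hconv _)⟩
  induction k with
  | zero =>
    obtain ⟨C, hC, h⟩ := step hk ENNReal.one_ne_top
    exact ⟨C, hC, fun P _ Δ hΔ _ hP => h P Δ hΔ hP (by simp)⟩
  | succ k ih =>
    obtain ⟨C, hC, h⟩ := ih (by omega)
    obtain ⟨C', hC', h'⟩ := step hk (ENNReal.mul_ne_top (ENNReal.ofReal_ne_top (r := D)) hC)
    exact ⟨C', hC', fun P _ Δ hΔ hD hP => h' P Δ hΔ hP ((h P Δ hΔ hD hP).2.trans (by gcongr))⟩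

/-! ### The moment recursion -/

lemma integrable_pow_iff_lintegral_lt_top {μ : Measure ℝ} {k : ℕ} :
    Integrable (fun x : ℝ => x ^ k) μ ↔ ∫⁻ x, ‖x‖ₑ ^ k ∂μ < ⊤ := by
  simp only [Integrable, hasFiniteIntegral_iff_enorm, enorm_pow, and_iff_right_iff_imp]
  intro
  fun_prop

lemma integral_pow_conv {μ ν : Measure ℝ} [SFinite μ] [SFinite ν] {k : ℕ}
    (hμ : ∀ j ≤ k, Integrable (fun x : ℝ => x ^ j) μ)
    (hν : ∀ j ≤ k, Integrable (fun x : ℝ => x ^ j) ν)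
    (hμν : Integrable (fun x : ℝ => x ^ k) (μ ∗ ν)) :
    ∫ x, x ^ k ∂(μ ∗ ν) =
      ∑ m ∈ range (k + 1), (∫ x, x ^ m ∂μ) * (∫ x, x ^ (k - m) ∂ν) * k.choose m := by
  rw [integral_conv hμν]
  simp_rw [add_pow]
  have h (x : ℝ) : ∫ y, ∑ m ∈ range (k + 1), x ^ m * y ^ (k - m) * (k.choose m : ℝ) ∂ν =
      ∑ m ∈ range (k + 1), x ^ m * (∫ y, y ^ (k - m) ∂ν) * k.choose m := by
    rw [integral_finsetSum _ fun m _ => ((hν (k - m) (Nat.sub_le k m)).const_mul _).mul_const _]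
    simp only [integral_mul_const, integral_const_mul]
  simp_rw [h]
  rw [integral_finsetSum _ fun m hm => ((hμ m (by simpa [Nat.lt_succ_iff] using hm)).mul_const
    _).mul_const _]
  simp only [integral_mul_const]

lemma integrable_pow_withDensity {f : ℝ → ℝ} (hf : AEMeasurable f) {k : ℕ}
    (hk : Integrable fun x : ℝ => x ^ k * f x) :
    Integrable (fun x : ℝ => x ^ k) (volume.withDensity fun x => ENNReal.ofReal (f x)) ∧
      Integrable (fun x : ℝ => x ^ k) (volume.withDensity fun x => ENNReal.ofReal (-f x)) := by
  rw [← integrable_add_measure, withDensity_ofReal_add_neg hf, integrable_pow_iff_lintegral_lt_top]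
  exact lintegral_enorm_pow_withDensity_lt_top hf hk

lemma IncrementLawN.integrable_pow {N : ℝ → ℝ} (hN0 : ∀ x, 0 ≤ N x) {p : ℕ}
    (hN : ∀ k < p, Integrable fun x : ℝ => x ^ k * (x * N x)) {P : Measure ℝ}
    [IsProbabilityMeasure P] {Δ : ℝ} (hΔ : 0 < Δ) (hP : IncrementLawN P Δ N) {j : ℕ} (hj : j ≤ p) :
    Integrable (fun x : ℝ => x ^ j) P := by
  cases j with
  | zero => simp
  | succ k =>
    obtain ⟨C, hC, h⟩ := exists_lintegral_enorm_pow_le hN0 hN Δ hj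
    exact integrable_pow_iff_lintegral_lt_top.2
      ((h P Δ hΔ le_rfl hP).2.trans_lt (by finiteness))

lemma IncrementLawN.integral_pow_succ {N : ℝ → ℝ} (hN0 : ∀ x, 0 ≤ N x) {p : ℕ}
    (hN : ∀ k < p, Integrable fun x : ℝ => x ^ k * (x * N x)) {P : Measure ℝ}
    [IsProbabilityMeasure P] {Δ : ℝ} (hΔ : 0 < Δ) (hP : IncrementLawN P Δ N) {k : ℕ} (hk : k < p) :
    ∫ x, x ^ (k + 1) ∂P =
      Δ * ∑ m ∈ range (k + 1),
        (∫ x, x ^ m * (x * N x)) * (∫ x, x ^ (k - m) ∂P) * k.choose m := by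
  have hN' : Integrable fun x : ℝ => x * N x := by simpa using hN 0 (by omega)
  have hid := hP.integrable_id hN0 hN' hΔ
  have hPpow {j : ℕ} (hj : j ≤ p) := hP.integrable_pow hN0 hN hΔ hj
  have hdens {m : ℕ} (hm : m ≤ k) :=
    integrable_pow_withDensity hN'.1.aemeasurable (hN m (hm.trans_lt hk))
  have := isFiniteMeasure_withDensity_ofReal hN'.2
  have := isFiniteMeasure_withDensity_ofReal_neg hN'
  obtain ⟨C, hC, h⟩ := exists_lintegral_enorm_pow_le hN0 hN Δ hk
  have hconv : Integrable (fun x : ℝ => x ^ k) ((volume.withDensity fun x => ‖x * N x‖ₑ) ∗ P) :=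
    integrable_pow_iff_lintegral_lt_top.2 ((h P Δ hΔ le_rfl hP).1.trans_lt hC.lt_top)
  rw [← withDensity_ofReal_conv_add_neg hN' P, integrable_add_measure] at hconv
  have hsucc : Integrable (fun x : ℝ => x • x ^ k) P :=
    (hPpow hk).congr (Eventually.of_forall fun x => pow_succ' x k)
  have hsign : Integrable (fun x : ℝ => x ^ k) (P.withDensity fun x => ENNReal.ofReal x) ∧
      Integrable (fun x : ℝ => x ^ k) (P.withDensity fun x => ENNReal.ofReal (-x)) := by
    rw [← integrable_add_measure, withDensity_ofReal_add_neg (f := fun x => x) aemeasurable_id',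
      integrable_pow_iff_lintegral_lt_top,
      lintegral_withDensity_eq_lintegral_mul _ (by fun_prop) (by fun_prop)]
    simpa [hasFiniteIntegral_iff_enorm, enorm_mul, enorm_pow] using hsucc.2
  have key := congrArg (fun μ => ∫ x, x ^ k ∂μ) (hP.withDensity_id_add_eq hN' hΔ hid)
  rw [integral_add_measure hsign.1 hconv.2.smul_measure_nnreal,
    integral_add_measure hsign.2 hconv.1.smul_measure_nnreal, integral_smul_nnreal_measure,
    integral_smul_nnreal_measure, NNReal.smul_def, NNReal.smul_def, Real.coe_toNNReal _ hΔ.le,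
    smul_eq_mul, smul_eq_mul] at key
  have hleft := integral_withDensity_ofReal_sub (f := fun x => x) (h := fun x => x ^ k)
    hid.1.aemeasurable (by fun_prop) hsucc
  have hright (m : ℕ) (hm : m ≤ k) := integral_withDensity_ofReal_sub (μ := volume)
    (f := fun x => x * N x) (h := fun x => x ^ m) hN'.1.aemeasurable (by fun_prop)
    ((hN m (hm.trans_lt hk)).congr (Eventually.of_forall fun x => mul_comm _ _))
  calc ∫ x, x ^ (k + 1) ∂P = ∫ x, x • x ^ k ∂P := by simp only [pow_succ', smul_eq_mul]
    _ = Δ * (∫ x, x ^ k ∂((volume.withDensity fun x => ENNReal.ofReal (x * N x)) ∗ P) -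
          ∫ x, x ^ k ∂((volume.withDensity fun x => ENNReal.ofReal (-(x * N x))) ∗ P)) := by
        rw [← hleft]
        linear_combination key
    _ = _ := by
        rw [integral_pow_conv (fun j hj => (hdens hj).1) (fun j hj => hPpow (hj.trans hk.le))
            hconv.1, integral_pow_conv (fun j hj => (hdens hj).2)
            (fun j hj => hPpow (hj.trans hk.le)) hconv.2, ← sum_sub_distrib]
        congr 1
        refine sum_congr rfl fun m hm => ?_
        rw [← sub_mul, ← sub_mul, hright m (by simpa [Nat.lt_succ_iff] using hm)]
        simp only [smul_eq_mul, mul_comm (_ ^ m)]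

lemma tendsto_integral_pow_zero {N : ℝ → ℝ} (hN0 : ∀ x, 0 ≤ N x) {p : ℕ}
    (hN : ∀ k < p, Integrable fun x : ℝ => x ^ k * (x * N x)) {P : ℝ → Measure ℝ}
    (hprob : ∀ Δ : ℝ, 0 < Δ → IsProbabilityMeasure (P Δ))
    (hP : ∀ Δ : ℝ, 0 < Δ → IncrementLawN (P Δ) Δ N) {j : ℕ} (hj0 : j ≠ 0) (hj : j ≤ p) :
    Tendsto (fun Δ => ∫ x, x ^ j ∂(P Δ)) (𝓝[>] 0) (𝓝 0) := by
  obtain ⟨k, rfl⟩ := Nat.exists_eq_succ_of_ne_zero hj0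
  obtain ⟨C, hC, h⟩ := exists_lintegral_enorm_pow_le hN0 hN 1 hj
  have hlim : Tendsto (fun Δ : ℝ => Δ * C.toReal) (𝓝[>] 0) (𝓝 0) := by
    have : Tendsto (fun Δ : ℝ => Δ * C.toReal) (𝓝 0) (𝓝 (0 * C.toReal)) :=
      tendsto_id.mul_const _
    rw [zero_mul] at this
    exact this.mono_left nhdsWithin_le_nhds
  refine squeeze_zero_norm' ?_ hlim
  filter_upwards [Ioc_mem_nhdsGT zero_lt_one] with Δ hΔ
  have := hprob Δ hΔ.1
  calc ‖∫ x, x ^ (k + 1) ∂(P Δ)‖ ≤ (∫⁻ x, ‖x‖ₑ ^ (k + 1) ∂(P Δ)).toReal := by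
        rw [← toReal_enorm]
        refine ENNReal.toReal_mono (integrable_pow_iff_lintegral_lt_top.1
          ((hP Δ hΔ.1).integrable_pow hN0 hN hΔ.1 hj)).ne ?_
        simpa only [enorm_pow] using enorm_integral_le_lintegral_enorm (μ := P Δ) (· ^ (k + 1))
    _ ≤ (ENNReal.ofReal Δ * C).toReal :=
        ENNReal.toReal_mono (by finiteness) (h (P Δ) Δ hΔ.1 hΔ.2 (hP Δ hΔ.1)).2
    _ = Δ * C.toReal := by rw [ENNReal.toReal_mul, ENNReal.toReal_ofReal hΔ.1.le]

lemma IncrementLawN.integral_abs_le {N : ℝ → ℝ} (hN0 : ∀ x, 0 ≤ N x)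
    (hN : Integrable fun x : ℝ => x * N x) {P : Measure ℝ} [IsProbabilityMeasure P] {Δ : ℝ}
    (hΔ : 0 < Δ) (hP : IncrementLawN P Δ N) :
    ∫ x, |x| ∂P ≤ Δ * nl1 fun x => x * N x := by
  have hid := hP.integrable_id hN0 hN hΔ
  have h := hP.lintegral_enorm_pow_succ_le hN hΔ hid 0
  have hfin := isFiniteMeasure_withDensity hN.2.ne
  have huniv : ((volume.withDensity fun x => ‖x * N x‖ₑ) ∗ P) Set.univ =
      ∫⁻ x, ‖x * N x‖ₑ := by
    rw [← lintegral_one, Measure.lintegral_conv measurable_const]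
    simp
  simp only [pow_zero, zero_add, pow_one, lintegral_one, huniv] at h
  simp only [nl1, ← norm_eq_abs]
  rw [integral_norm_eq_lintegral_enorm hid.1, integral_norm_eq_lintegral_enorm hN.1,
    ← ENNReal.toReal_ofReal hΔ.le, ← ENNReal.toReal_mul]
  exact ENNReal.toReal_mono (ENNReal.mul_ne_top ENNReal.ofReal_ne_top hN.2.ne) h

lemma integrable_pow_mul_of_le {f : ℝ → ℝ} (hf : Integrable f) {n : ℕ}
    (hn : Integrable fun x : ℝ => |x| ^ n * |f x|) {k : ℕ} (hk : k ≤ n) :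
    Integrable fun x : ℝ => x ^ k * f x := by
  refine (hf.norm.add hn).mono' ((by fun_prop : AEStronglyMeasurable (fun x : ℝ => x ^ k) _).mul
    hf.1) (Eventually.of_forall fun x => ?_)
  simp only [norm_mul, norm_pow, norm_eq_abs, Pi.add_apply]
  have h : |x| ^ k ≤ 1 + |x| ^ n := by
    rcases le_total |x| 1 with hx | hx
    · exact (pow_le_one₀ (abs_nonneg x) hx).trans (by simp)
    · exact (pow_le_pow_right₀ hx hk).trans (by simp)
  nlinarith [mul_le_mul_of_nonneg_right h (abs_nonneg (f x))]

lemma integrable_id_mul_of_levy {N : ℝ → ℝ} (hN0 : ∀ x, 0 ≤ N x)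
    (hN : Integrable fun x : ℝ => min 1 |x| * N x) {n : ℕ}
    (hn : Integrable fun x : ℝ => |x| ^ n * |x * N x|) : Integrable fun x : ℝ => x * N x := by
  have hm : AEMeasurable fun x : ℝ => x / min 1 |x| * (min 1 |x| * N x) := by
    have := hN.1.aemeasurable
    fun_prop
  have heq : (fun x : ℝ => x / min 1 |x| * (min 1 |x| * N x)) = fun x => x * N x := by
    funext x
    rcases eq_or_ne x 0 with rfl | hx
    · simp
    · have : 0 < min 1 |x| := lt_min one_pos (abs_pos.2 hx)
      field_simp
  rw [heq] at hm
  refine (hN.add hn).mono' hm.aestronglyMeasurable (Eventually.of_forall fun x => ?_)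
  have h1 : 0 ≤ |x| ^ n * |x * N x| := by positivity
  have h2 : 0 ≤ min 1 |x| * N x := mul_nonneg (by positivity) (hN0 x)
  simp only [Pi.add_apply, norm_eq_abs]
  rcases le_total |x| 1 with hx | hx
  · rw [min_eq_right hx] at h2 ⊢
    rw [abs_mul, abs_of_nonneg (hN0 x)] at h1 ⊢
    linarith
  · have := mul_le_mul_of_nonneg_right (one_le_pow₀ (n := n) hx) (abs_nonneg (x * N x))
    linarith

/-- Proposition 6.2 (moments of the increments). -/
theorem increment_moments (N : ℝ → ℝ) (hN0 : ∀ x, 0 ≤ N x)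
    (hNlevy : Integrable (fun x : ℝ => min 1 |x| * N x))
    (g : ℝ → ℝ) (hg : ∀ x, g x = x * N x)
    (p : ℕ) (hp : 1 ≤ p) (hmom : Integrable (fun x : ℝ => |x| ^ (p - 1) * |g x|))
    (P : ℝ → Measure ℝ) (hprob : ∀ Δ : ℝ, 0 < Δ → IsProbabilityMeasure (P Δ))
    (hP : ∀ Δ : ℝ, 0 < Δ → IncrementLawN (P Δ) Δ N) :
    (∀ Δ : ℝ, 0 < Δ → Integrable (fun x : ℝ => |x| ^ p) (P Δ)) ∧
    ((fun Δ : ℝ => (∫ x : ℝ, x ^ p ∂(P Δ)) - Δ * ∫ x : ℝ, x ^ (p - 1) * g x)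
      =o[𝓝[>] (0 : ℝ)] fun Δ : ℝ => Δ) ∧
    (Integrable g → ∀ Δ : ℝ, 0 < Δ → (∫ x : ℝ, |x| ∂(P Δ)) ≤ 2 * Δ * nl1 g) := by
  obtain rfl : g = fun x => x * N x := funext hg
  have hN := integrable_id_mul_of_levy hN0 hNlevy hmom
  have hpow : ∀ k < p, Integrable fun x : ℝ => x ^ k * (x * N x) := fun k hk =>
    integrable_pow_mul_of_le hN hmom (Nat.le_sub_one_of_lt hk)
  refine ⟨fun Δ hΔ => ?_, ?_, fun _ Δ hΔ => ?_⟩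
  · have := hprob Δ hΔ
    simpa only [norm_pow, norm_eq_abs] using
      ((hP Δ hΔ).integrable_pow hN0 hpow hΔ le_rfl).norm
  · obtain ⟨k, rfl⟩ := Nat.exists_eq_add_of_le' hp
    rw [Nat.add_sub_cancel]
    have hlim : Tendsto (fun Δ => ∑ m ∈ range k,
        (∫ x, x ^ m * (x * N x)) * (∫ x, x ^ (k - m) ∂(P Δ)) * k.choose m) (𝓝[>] 0) (𝓝 0) := by
      rw [← sum_const_zero (s := range k)]
      refine tendsto_finsetSum _ fun m hm => ?_
      have hmk : m < k := mem_range.1 hm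
      simpa using ((tendsto_integral_pow_zero hN0 hpow hprob hP (Nat.sub_ne_zero_of_lt hmk)
        (by omega)).const_mul (∫ x, x ^ m * (x * N x))).mul_const (k.choose m : ℝ)
    have hlittle := (isBigO_refl (fun Δ : ℝ => Δ) (𝓝[>] 0)).mul_isLittleO
      ((isLittleO_one_iff ℝ).2 hlim)
    refine hlittle.congr' ?_ (Eventually.of_forall fun Δ => mul_one Δ)
    filter_upwards [self_mem_nhdsWithin] with Δ hΔ
    have := hprob Δ hΔ
    rw [(hP Δ hΔ).integral_pow_succ hN0 hpow hΔ k.lt_succ_self, sum_range_succ]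
    simp
    ring
  · have := hprob Δ hΔ
    have h := (hP Δ hΔ).integral_abs_le hN0 hN hΔ
    have h0 : 0 ≤ Δ * nl1 fun x => x * N x :=
      mul_nonneg hΔ.le (integral_nonneg fun x => abs_nonneg _)
    linarith

end LevyAdapt
end
end
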